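/- arXiv:1503.02937 — 6 statements merged into one kernel-verified Lean document; each statement's English description precedes it below -/
import Mathlib

section
/- The projective Hjelmslev plane PHG(2, ℤ/4ℤ) contains exactly 256 hyperovals. -/
/-- A point of a projective Hjelmslev geometry PHG(n-1, R): a free rank-1 submodule
of Rⁿ, i.e. the R-span of a vector having at least one unit coordinate. -/
def IsPoint {R : Type} [CommRing R] {n : ℕ} (P : Submodule R (Fin n → R)) : Prop :=
  ∃ v : Fin n → R, (∃ i, IsUnit (v i)) ∧ P = Submodule.span R {v}

/-- A free rank-k submodule of Rⁿ: a submodule linearly isomorphic to Rᵏ. -/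
def IsFreeRank {R : Type} [CommRing R] {n : ℕ} (k : ℕ) (L : Submodule R (Fin n → R)) : Prop :=
  Nonempty ((Fin k → R) ≃ₗ[R] L)

/-- A line of PHG(2, R): a free rank-2 submodule of R³. -/
abbrev IsLine {R : Type} [CommRing R] (L : Submodule R (Fin 3 → R)) : Prop := IsFreeRank 2 L

/-- A hyperoval of PHG(2, R), |R| = 4: a set of 7 points with at most 2 points on each line. -/
def IsHyperoval {R : Type} [CommRing R] (H : Set (Submodule R (Fin 3 → R))) : Prop :=
  (∀ P ∈ H, IsPoint P) ∧ H.ncard = 7 ∧ ∀ L, IsLine L → {P ∈ H | P ≤ L}.ncard ≤ 2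

abbrev R4 := ZMod 4


/-- Representatives of the 28 points (and, dually, of the 28 lines). -/
def hVec : Fin 28 → Fin 3 → R4 :=
  ![![0, 0, 1], ![0, 1, 0], ![0, 1, 1], ![0, 1, 2], ![0, 1, 3], ![0, 2, 1], ![1, 0, 0],
    ![1, 0, 1], ![1, 0, 2], ![1, 0, 3], ![1, 1, 0], ![1, 1, 1], ![1, 1, 2], ![1, 1, 3],
    ![1, 2, 0], ![1, 2, 1], ![1, 2, 2], ![1, 2, 3], ![1, 3, 0], ![1, 3, 1], ![1, 3, 2],
    ![1, 3, 3], ![2, 0, 1], ![2, 1, 0], ![2, 1, 1], ![2, 1, 2], ![2, 1, 3], ![2, 2, 1]]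

/-- First basis vector (as a point index) of the line with index `w`. -/
def hA : Fin 28 → Fin 28 := ![23, 22, 26, 27, 24, 25, 5, 25, 27, 25, 27, 24, 22, 26, 26, 23, 27, 23, 27, 26, 22, 24, 23, 22, 26, 27, 24, 25]

/-- Second basis vector (as a point index) of the line with index `w`. -/
def hB : Fin 28 → Fin 28 := ![18, 9, 19, 17, 21, 20, 4, 21, 26, 19, 21, 18, 20, 18, 25, 19, 25, 21, 13, 20, 21, 20, 20, 17, 21, 16, 19, 18]

def hDot (x y : Fin 3 → R4) : R4 := x 0 * y 0 + x 1 * y 1 + x 2 * y 2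

def hPt (i : Fin 28) : Submodule R4 (Fin 3 → R4) := Submodule.span R4 {hVec i}

/-- Incidence masks: bit `w` of `hM i` says that point `i` is on line `w`. -/
def hM (i : Fin 28) : ℕ := (12842917878142121021016936098477500118798620067920923156102627873656276993341174680774796937811740899773291128704918177326385204017274809590496704564721765710815144795367278567202071834701334271785886089480076046790771108370288908452930 >>> (28 * i.val)) % 268435456

theorem hM_spec : ∀ i w : Fin 28, (hM i).testBit w.val = decide (hDot (hVec w) (hVec i) = 0) := by
  decide +kernel

theorem hM_big (i : Fin 28) (w : ℕ) (hw : 28 ≤ w) : (hM i).testBit w = false := by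
  apply Nat.testBit_lt_two_pow
  have h1 : hM i < 2 ^ 28 := by unfold hM; omega
  exact lt_of_lt_of_le h1 (Nat.pow_le_pow_right (by norm_num) hw)

theorem hVec_inj : ∀ (i j : Fin 28) (c : R4), hVec i = c • hVec j → i = j := by
  decide +kernel

theorem hVec_ne : ∀ (i : Fin 28), ∃ j, hVec i j = 1 := by
  decide +kernel

theorem hVec_surj : ∀ x y z : R4, (2 * x ≠ 0 ∨ 2 * y ≠ 0 ∨ 2 * z ≠ 0) →
    ∃ (i : Fin 28), (![x, y, z] = (1 : R4) • hVec i) ∨ (![x, y, z] = (3 : R4) • hVec i) := by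
  decide +kernel

theorem hJoin : ∀ i j : Fin 28, ∃ w : Fin 28,
    hDot (hVec w) (hVec i) = 0 ∧ hDot (hVec w) (hVec j) = 0 := by
  decide +kernel

theorem hBasis_indep : ∀ (w : Fin 28) (c d : R4),
    c • hVec (hA w) + d • hVec (hB w) = 0 → c = 0 ∧ d = 0 := by
  decide +kernel

theorem hBasis_span : ∀ (w i : Fin 28), hDot (hVec w) (hVec i) = 0 →
    ∃ c d : R4, c • hVec (hA w) + d • hVec (hB w) = hVec i := by
  decide +kernel

theorem hPt_inj : Function.Injective hPt := by
  intro i j h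
  have h1 : hVec i ∈ hPt j := h ▸ Submodule.mem_span_singleton_self _
  obtain ⟨c, hc⟩ := Submodule.mem_span_singleton.1 h1
  exact hVec_inj i j c hc.symm

theorem hVec_surj' (v : Fin 3 → R4) (hv : (2 : R4) • v ≠ 0) :
    ∃ i, ∃ u : R4, IsUnit u ∧ v = u • hVec i := by
  have hve : ![v 0, v 1, v 2] = v := by
    ext j; fin_cases j <;> rfl
  have h := hVec_surj (v 0) (v 1) (v 2) (by
    by_contra! hcon
    obtain ⟨h0, h1, h2⟩ := hcon
    apply hv
    ext j
    fin_cases j <;> simp [h0, h1, h2])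
  rw [hve] at h
  obtain ⟨i, h | h⟩ := h
  · exact ⟨i, 1, isUnit_one, h⟩
  · exact ⟨i, 3, IsUnit.of_mul_eq_one 3 (by decide), h⟩

theorem isPoint_iff (P : Submodule R4 (Fin 3 → R4)) : IsPoint P ↔ ∃ i, P = hPt i := by
  constructor
  · rintro ⟨v, ⟨j, hj⟩, rfl⟩
    have h2 : (2 : R4) • v ≠ 0 := by
      intro h0
      have h3 := congrFun h0 j
      simp only [Pi.smul_apply, smul_eq_mul, Pi.zero_apply] at h3
      have h4 := (hj.mul_left_eq_zero).1 h3
      exact absurd h4 (by decide)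
    obtain ⟨i, u, hu, rfl⟩ := hVec_surj' v h2
    exact ⟨i, Submodule.span_singleton_smul_eq hu _⟩
  · rintro ⟨i, rfl⟩
    obtain ⟨j, hj⟩ := hVec_ne i
    exact ⟨hVec i, ⟨j, hj ▸ isUnit_one⟩, rfl⟩

theorem line_dot (L : Submodule R4 (Fin 3 → R4)) (hL : IsLine L) :
    ∃ w : Fin 28, ∀ i, hPt i ≤ L → hDot (hVec w) (hVec i) = 0 := by
  obtain ⟨e⟩ := hL
  have key : ∀ c : Fin 2 → R4, (2 : R4) • c ≠ 0 → (2 : R4) • ((e c : L) : Fin 3 → R4) ≠ 0 := by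
    intro c hc h
    apply hc
    apply e.injective
    apply Subtype.ext
    simpa using h
  obtain ⟨i, u, -, ha⟩ := hVec_surj' _ (key ![1, 0] (by decide))
  obtain ⟨j, t, -, hb⟩ := hVec_surj' _ (key ![0, 1] (by decide))
  obtain ⟨w, hwi, hwj⟩ := hJoin i j
  refine ⟨w, fun k hk => ?_⟩
  have hkL : hVec k ∈ L := hk (Submodule.mem_span_singleton_self _)
  obtain ⟨c, hc⟩ := e.surjective ⟨hVec k, hkL⟩
  have hcc : c = c 0 • ![1, 0] + c 1 • ![0, 1] := by
    ext j; fin_cases j <;> simp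
  have hk2 : hVec k = c 0 • (u • hVec i) + c 1 • (t • hVec j) := by
    rw [← ha, ← hb]
    have h5 := congrArg (Subtype.val) hc
    rw [hcc, map_add, map_smul, map_smul] at h5
    exact h5.symm
  rw [hk2]
  unfold hDot at hwi hwj ⊢
  simp only [Pi.add_apply, Pi.smul_apply, smul_eq_mul]
  linear_combination (c 0 * u) * hwi + (c 1 * t) * hwj

theorem dot_line (w : Fin 28) :
    ∃ L : Submodule R4 (Fin 3 → R4), IsLine L ∧ ∀ i, hDot (hVec w) (hVec i) = 0 → hPt i ≤ L := by
  let f : (Fin 2 → R4) →ₗ[R4] (Fin 3 → R4) :=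
    Fintype.linearCombination R4 ![hVec (hA w), hVec (hB w)]
  have hf : ∀ c, f c = c 0 • hVec (hA w) + c 1 • hVec (hB w) := by
    intro c
    simp [f, Fintype.linearCombination_apply, Fin.sum_univ_two]
  have hinj : Function.Injective f := by
    rw [injective_iff_map_eq_zero]
    intro c hc
    rw [hf] at hc
    obtain ⟨h0, h1⟩ := hBasis_indep w _ _ hc
    ext j; fin_cases j <;> simp [h0, h1]
  refine ⟨LinearMap.range f, ⟨LinearEquiv.ofInjective f hinj⟩, fun i hi => ?_⟩
  obtain ⟨c, d, hcd⟩ := hBasis_span w i hi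
  unfold hPt
  rw [Submodule.span_singleton_le_iff_mem]
  exact ⟨![c, d], by rw [hf]; simpa using hcd⟩

/-- The set of points with indices in a list. -/
def hSet (s : List (Fin 28)) : Set (Submodule R4 (Fin 3 → R4)) := {P | ∃ i ∈ s, P = hPt i}

theorem hSet_ncard (s : List (Fin 28)) (hs : s.Nodup) : (hSet s).ncard = s.length := by
  have : hSet s = Set.image hPt (s.toFinset : Set (Fin 28)) := by
    ext P
    simp only [hSet, Set.mem_ofPred_eq, Set.mem_image, List.coe_toFinset]
    constructor
    · rintro ⟨i, hi, rfl⟩; exact ⟨i, hi, rfl⟩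
    · rintro ⟨i, hi, rfl⟩; exact ⟨i, hi, rfl⟩
  rw [this, Set.ncard_image_of_injective _ hPt_inj, Set.ncard_coe_finset,
    List.toFinset_card_of_nodup hs]

/-- Combinatorial form of the hyperoval condition. -/
def hGood (s : List (Fin 28)) : Prop :=
  s.length = 7 ∧ ∀ w : ℕ, s.countP (fun i => (hM i).testBit w) ≤ 2

theorem hyperoval_iff (s : List (Fin 28)) (hs : s.Nodup) : IsHyperoval (hSet s) ↔ hGood s := by
  classical
  have hsub : ∀ L, {P ∈ hSet s | P ≤ L} = hSet (s.filter (fun i => decide (hPt i ≤ L))) := by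
    intro L
    ext P
    simp only [hSet, Set.mem_ofPred_eq, List.mem_filter, decide_eq_true_eq]
    constructor
    · rintro ⟨⟨i, hi, rfl⟩, h⟩; exact ⟨i, ⟨hi, h⟩, rfl⟩
    · rintro ⟨i, ⟨hi, h⟩, rfl⟩; exact ⟨⟨i, hi, rfl⟩, h⟩
  have hcard : ∀ L, {P ∈ hSet s | P ≤ L}.ncard = s.countP (fun i => decide (hPt i ≤ L)) := by
    intro L
    rw [hsub, hSet_ncard _ (hs.filter _), List.countP_eq_length_filter]
  unfold IsHyperoval hGood
  rw [hSet_ncard s hs]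
  constructor
  · rintro ⟨-, h7, h⟩
    refine ⟨h7, fun w => ?_⟩
    by_cases hw : w < 28
    · obtain ⟨L, hL, hLi⟩ := dot_line ⟨w, hw⟩
      refine le_trans ?_ (hcard L ▸ h L hL)
      apply List.countP_mono_left
      intro i _ hi
      have := hM_spec i ⟨w, hw⟩
      simp only at this
      rw [this] at hi
      simpa using hLi i (by simpa using hi)
    · have : s.countP (fun i => (hM i).testBit w) = 0 := by
        rw [List.countP_eq_zero]
        intro i _
        simp [hM_big i w (by omega)]
      omega
  · rintro ⟨h7, h⟩
    refine ⟨?_, h7, fun L hL => ?_⟩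
    · rintro P ⟨i, -, rfl⟩
      exact (isPoint_iff _).2 ⟨i, rfl⟩
    · obtain ⟨w, hw⟩ := line_dot L hL
      rw [hcard]
      refine le_trans ?_ (h w.val)
      apply List.countP_mono_left
      intro i _ hi
      rw [hM_spec]
      simpa using hw i (by simpa using hi)

/-- Depth-first search counter; `A` and `B` record the lines met at least once / twice. -/
def hCnt : List ℕ → ℕ → ℕ → ℕ → ℕ
  | _, 0, _, _ => 1
  | [], _ + 1, _, _ => 0
  | x :: l, k + 1, A, B =>
    hCnt l (k + 1) A B + bif Nat.beq (B &&& x) 0 then hCnt l k (A ||| x) (B ||| (A &&& x)) else 0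

def hRun : ℕ → ℕ → List ℕ → Bool
  | _, _, [] => true
  | A, B, x :: s => Nat.beq (B &&& x) 0 && hRun (A ||| x) (B ||| (A &&& x)) s

theorem hCnt_eq (l : List ℕ) : ∀ k A B,
    hCnt l k A B = l.sublists'.countP (fun s => s.length == k && hRun A B s) := by
  have hz : ∀ (l : List ℕ) A B, l.sublists'.countP (fun s => s.length == 0 && hRun A B s) = 1 := by
    intro l A B
    induction l with
    | nil => simp [hRun]
    | cons x l ih =>
      rw [List.sublists'_cons, List.countP_append, ih, List.countP_map]
      simp [Function.comp_def]
  induction l with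
  | nil =>
    intro k A B
    cases k with
    | zero => rw [hz]; rfl
    | succ k => simp [hCnt]
  | cons x l ih =>
    intro k A B
    cases k with
    | zero => rw [hz]; rfl
    | succ k =>
      rw [List.sublists'_cons, List.countP_append, ← ih, List.countP_map, hCnt, ih k]
      congr 1
      cases hb : Nat.beq (B &&& x) 0
      · simp [Function.comp_def, hRun, hb]
      · simp [Function.comp_def, hRun, hb]

theorem hRun_iff (s : List ℕ) : ∀ A B, (∀ w, B.testBit w = true → A.testBit w = true) →
    (hRun A B s = true ↔
      ∀ w, (s.countP fun x => x.testBit w) = 0 ∨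
        (A.testBit w).toNat + (B.testBit w).toNat + (s.countP fun x => x.testBit w) ≤ 2) := by
  induction s with
  | nil => intro A B _; simp [hRun]
  | cons x s ih =>
    intro A B hAB
    have hAB' : ∀ w, (B ||| (A &&& x)).testBit w = true → (A ||| x).testBit w = true := by
      intro w
      have := hAB w
      simp only [Nat.testBit_or, Nat.testBit_and]
      revert this
      cases A.testBit w <;> cases B.testBit w <;> cases x.testBit w <;> simp
    rw [hRun, Bool.and_eq_true, ih _ _ hAB']
    have h0 : Nat.beq (B &&& x) 0 = true ↔ ∀ w, (B.testBit w && x.testBit w) = false := by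
      rw [Nat.beq_eq]
      constructor
      · intro h w
        rw [← Nat.testBit_and, h, Nat.zero_testBit]
      · intro h
        apply Nat.eq_of_testBit_eq
        intro w
        rw [Nat.testBit_and, h, Nat.zero_testBit]
    rw [h0, ← forall_and]
    apply forall_congr'
    intro w
    have := hAB w
    simp only [Nat.testBit_or, Nat.testBit_and, List.countP_cons]
    generalize (s.countP fun x => x.testBit w) = n
    revert this
    cases A.testBit w <;> cases B.testBit w <;> cases x.testBit w <;> simp <;> omega

theorem hCnt_val : hCnt ((List.finRange 28).map hM) 7 0 0 = 256 := by
  decide +kernel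

theorem hGood_iff (s : List (Fin 28)) :
    hGood s ↔ ((s.map hM).length == 7 && hRun 0 0 (s.map hM)) = true := by
  rw [Bool.and_eq_true, hRun_iff _ 0 0 (by simp)]
  unfold hGood
  simp only [List.countP_map, Function.comp_def, Nat.zero_testBit, Bool.toNat_false, List.length_map,
    beq_iff_eq]
  refine and_congr_right fun _ => forall_congr' fun w => ?_
  omega

/-- All hyperovals, as increasing lists of indices. -/
def hList : List (List (Fin 28)) :=
  (List.finRange 28).sublists'.filter
    (fun s => (s.map hM).length == 7 && hRun 0 0 (s.map hM))

theorem hList_length : hList.length = 256 := by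
  rw [← hCnt_val, hCnt_eq, List.sublists'_map, List.countP_map, hList,
    List.countP_eq_length_filter]
  rfl

theorem hList_nodup : hList.Nodup :=
  List.Nodup.filter _ (List.nodup_sublists'.2 (List.nodup_finRange 28))

theorem mem_hList (s : List (Fin 28)) :
    s ∈ hList ↔ s.Sublist (List.finRange 28) ∧ hGood s := by
  rw [hList, List.mem_filter, List.mem_sublists', hGood_iff]

theorem hSet_inj (s t : List (Fin 28)) (hs : s.Sublist (List.finRange 28))
    (ht : t.Sublist (List.finRange 28)) (h : hSet s = hSet t) : s = t := by
  have hmem : ∀ (r : List (Fin 28)) i, i ∈ r ↔ hPt i ∈ hSet r := by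
    intro r i
    constructor
    · intro hi; exact ⟨i, hi, rfl⟩
    · rintro ⟨j, hj, hij⟩
      rwa [hPt_inj hij]
  have hn := List.nodup_finRange 28
  have hp : s.Perm t := by
    rw [List.perm_ext_iff_of_nodup (hn.sublist hs) (hn.sublist ht)]
    intro i
    rw [hmem s, hmem t, h]
  have hsort := List.pairwise_lt_finRange 28
  exact hp.eq_of_pairwise (fun a b _ _ h1 h2 => absurd h1 (lt_asymm h2))
    (hsort.sublist hs) (hsort.sublist ht)

/-- PHG(2, ℤ/4ℤ) contains exactly 256 hyperovals. -/
theorem hyperoval_count :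
    {H : Set (Submodule R4 (Fin 3 → R4)) | IsHyperoval H}.ncard = 256 := by
  classical
  have himg : {H : Set (Submodule R4 (Fin 3 → R4)) | IsHyperoval H} =
      Set.image hSet (hList.toFinset : Set (List (Fin 28))) := by
    ext H
    simp only [Set.mem_ofPred_eq, Set.mem_image, List.coe_toFinset, mem_hList]
    constructor
    · intro hH
      have hs : ((List.finRange 28).filter (fun i => decide (hPt i ∈ H))).Sublist
          (List.finRange 28) := List.filter_sublist
      have hset : hSet ((List.finRange 28).filter (fun i => decide (hPt i ∈ H))) = H := by
        ext P
        simp only [hSet, Set.mem_ofPred_eq, List.mem_filter, List.mem_finRange, true_and,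
          decide_eq_true_eq]
        constructor
        · rintro ⟨i, hi, rfl⟩; exact hi
        · intro hP
          obtain ⟨i, rfl⟩ := (isPoint_iff P).1 (hH.1 P hP)
          exact ⟨i, hP, rfl⟩
      refine ⟨_, ⟨hs, ?_⟩, hset⟩
      rw [← hyperoval_iff _ ((List.nodup_finRange 28).sublist hs), hset]
      exact hH
    · rintro ⟨s, ⟨hs, hg⟩, rfl⟩
      exact (hyperoval_iff s ((List.nodup_finRange 28).sublist hs)).2 hg
  rw [himg, Set.ncard_image_of_injOn, Set.ncard_coe_finset,
    List.toFinset_card_of_nodup hList_nodup, hList_length]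
  intro s hs t ht h
  simp only [List.coe_toFinset, Set.mem_ofPred_eq, mem_hList] at hs ht
  exact hSet_inj s t hs.1 ht.1 h
end

section
/- The group PGL(3, ℤ/4ℤ) acts transitively on the set of hyperovals of PHG(2, ℤ/4ℤ). -/
abbrev GL3 := GL (Fin 3) R4

/-- The subgroup {I, -I} of scalar matrices of GL(3, ℤ/4ℤ)
(the units of ℤ/4ℤ are ±1). -/
def pmOne : Subgroup GL3 where
  carrier := {1, -1}
  one_mem' := Or.inl rfl
  mul_mem' := by rintro a b (rfl | rfl) (rfl | rfl) <;> simp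
  inv_mem' := by rintro a (rfl | rfl) <;> simp

instance : pmOne.Normal := by
  constructor
  rintro n (rfl | rfl) g
  · simpa using pmOne.one_mem
  · right
    simp [mul_neg, neg_mul, Set.mem_singleton_iff]

/-- PGL(3, ℤ/4ℤ): GL(3, ℤ/4ℤ) modulo its subgroup of scalar matrices {I, -I}. -/
abbrev PGL3 := GL3 ⧸ pmOne

/-- A matrix maps a point (the span of a vector) to the span of the image vector;
equivalently, it maps a submodule to its image. -/
def mapPt (g : GL3) (P : Submodule R4 (Fin 3 → R4)) : Submodule R4 (Fin 3 → R4) :=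
  P.map (Matrix.mulVecLin (g : Matrix (Fin 3) (Fin 3) R4))

lemma mapPt_neg (h : GL3) (P : Submodule R4 (Fin 3 → R4)) : mapPt (-h) P = mapPt h P := by
  unfold mapPt
  have : Matrix.mulVecLin ((-h : GL3) : Matrix (Fin 3) (Fin 3) R4)
      = -Matrix.mulVecLin ((h : GL3) : Matrix (Fin 3) (Fin 3) R4) := by
    ext v i
    simp [Matrix.neg_mulVec]
  rw [this, Submodule.map_neg]

/-- The induced action of PGL(3, ℤ/4ℤ) on points of PHG(2, ℤ/4ℤ). -/
def pglMapPt (g : PGL3) (P : Submodule R4 (Fin 3 → R4)) : Submodule R4 (Fin 3 → R4) :=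
  Quotient.liftOn' g (fun h => mapPt h P) (by
    intro a b hab
    rw [QuotientGroup.leftRel_apply] at hab
    rcases hab with h1 | h1
    · have hb : b = a := by
        have h2 := mul_inv_cancel_left a b
        rw [h1, mul_one] at h2
        exact h2.symm
      rw [hb]
    · rw [Set.mem_singleton_iff] at h1
      have hb : b = -a := by
        have h2 := mul_inv_cancel_left a b
        rw [h1, mul_neg, mul_one] at h2
        exact h2.symm
      rw [hb]
      exact (mapPt_neg a P).symm)

/-- The induced action of PGL(3, ℤ/4ℤ) on sets of points. -/
def pglMapSet (g : PGL3) (H : Set (Submodule R4 (Fin 3 → R4))) : Set (Submodule R4 (Fin 3 → R4)) :=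
  pglMapPt g '' H


namespace HypAux

abbrev V := Fin 3 → R4

/-- The 13 normalized vectors without zero coordinates. -/
def cands : List (ℕ × ℕ × ℕ) :=
  [(1, 1, 1), (1, 1, 2), (1, 1, 3), (1, 2, 1), (1, 2, 2), (1, 2, 3), (1, 3, 1), (1, 3, 2),
    (1, 3, 3), (2, 1, 1), (2, 1, 2), (2, 1, 3), (2, 2, 1)]

/-- The 28 normalized functionals. -/
def funcs : List (ℕ × ℕ × ℕ) :=
  cands ++ [(0, 0, 1), (0, 1, 0), (0, 1, 1), (0, 1, 2), (0, 1, 3), (0, 2, 1), (1, 0, 0), (1, 0, 1),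
    (1, 0, 2), (1, 0, 3), (1, 1, 0), (1, 2, 0), (1, 3, 0), (2, 0, 1), (2, 1, 0)]

def dotN (w a : ℕ × ℕ × ℕ) : ℕ := w.1 * a.1 + w.2.1 * a.2.1 + w.2.2 * a.2.2

def isZ (w a : ℕ × ℕ × ℕ) : Bool := Nat.beq (dotN w a % 4) 0

/-- No common line (Boolean test). -/
def goodN (a b c : ℕ × ℕ × ℕ) : Bool :=
  funcs.all fun w => !(isZ w a && (isZ w b && isZ w c))

def good3 (a b : ℕ × ℕ × ℕ) : Bool :=
  goodN a b (1, 0, 0) && (goodN a b (0, 1, 0) && goodN a b (0, 0, 1))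

/-- The four special points scaled by diag(1,s,t). -/
def target (s t : ℕ) : List (ℕ × ℕ × ℕ) :=
  [(1, s, t), (1, 2, 3 * t % 4), (1, 3 * s % 4, 2), (2, 1, 3 * s * t % 4)]

def concl (a b c d : ℕ × ℕ × ℕ) : Bool :=
  [1, 3].any fun s => [1, 3].any fun t => [a, b, c, d].all fun x => (target s t).contains x

def coreB : Bool :=
  cands.all fun a => cands.all fun b => !(good3 a b) || cands.all fun c =>
    !(good3 a c && (good3 b c && goodN a b c)) || cands.all fun d =>
    !(good3 a d && (good3 b d && (good3 c d && (goodN a b d && (goodN a c d && goodN b c d))))) ||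
    concl a b c d

theorem coreB_true : coreB = true := by
  decide +kernel

theorem core {a b c d : ℕ × ℕ × ℕ} (ha : a ∈ cands) (hb : b ∈ cands) (hc : c ∈ cands)
    (hd : d ∈ cands) (h1 : good3 a b = true) (h2 : good3 a c = true) (h3 : good3 b c = true)
    (h4 : goodN a b c = true) (h5 : good3 a d = true) (h6 : good3 b d = true)
    (h7 : good3 c d = true) (h8 : goodN a b d = true) (h9 : goodN a c d = true)
    (h10 : goodN b c d = true) : ∃ s ∈ [1, 3], ∃ t ∈ [1, 3], ∀ x ∈ [a, b, c, d], x ∈ target s t := by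
  have h := coreB_true
  simp only [coreB, List.all_eq_true] at h
  have h := h a ha b hb
  rw [h1, Bool.not_true, Bool.false_or, List.all_eq_true] at h
  have h := h c hc
  rw [h2, h3, h4] at h
  simp only [Bool.and_true, Bool.not_true, Bool.false_or, List.all_eq_true] at h
  have h := h d hd
  rw [h5, h6, h7, h8, h9, h10] at h
  simp only [Bool.and_true, Bool.not_true, Bool.false_or, concl, List.any_eq_true,
    List.all_eq_true, List.contains_iff_mem] at h
  exact h

def toV (a : ℕ × ℕ × ℕ) : V := ![(a.1 : R4), (a.2.1 : R4), (a.2.2 : R4)]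

def dot (w v : V) : R4 := w 0 * v 0 + w 1 * v 1 + w 2 * v 2

theorem dot_toV (w a : ℕ × ℕ × ℕ) : dot (toV w) (toV a) = 0 ↔ isZ w a = true := by
  have : dot (toV w) (toV a) = ((dotN w a : ℕ) : R4) := by
    simp [dot, toV, dotN]
  rw [this, ZMod.natCast_eq_zero_iff, isZ, Nat.beq_eq, Nat.dvd_iff_mod_eq_zero]

def Uni (v : V) : Prop := ∃ i, IsUnit (v i)

theorem isUnit_iff4 (x : R4) : IsUnit x ↔ (x = 1 ∨ x = 3) := by
  revert x; decide +kernel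

theorem funcs_uni : ∀ w ∈ funcs, Uni (toV w) := by
  simp only [Uni, isUnit_iff4]
  decide +kernel

/-- The line with equation w. -/
def Lw (w : V) : Submodule R4 V where
  carrier := {v | dot w v = 0}
  zero_mem' := by simp [dot]
  add_mem' := by
    intro a b ha hb
    simp only [Set.mem_ofPred_eq, dot, Pi.add_apply] at *
    linear_combination ha + hb
  smul_mem' := by
    intro c a ha
    simp only [Set.mem_ofPred_eq, dot, Pi.smul_apply, smul_eq_mul] at *
    linear_combination c * ha

theorem mem_Lw (w v : V) : v ∈ Lw w ↔ dot w v = 0 := Iff.rfl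

theorem span_le_Lw (w v : V) : Submodule.span R4 {v} ≤ Lw w ↔ dot w v = 0 := by
  rw [Submodule.span_singleton_le_iff_mem, mem_Lw]

theorem isLine_Lw (w : V) (hw : Uni w) : IsLine (Lw w) := by
  obtain ⟨i, hi⟩ := hw
  have h1 : w i * w i = 1 := by
    rcases (isUnit_iff4 _).1 hi with h | h <;> rw [h] <;> decide
  fin_cases i
  · refine ⟨{ toFun := fun f => ⟨![-(w 0) * (w 1 * f 0 + w 2 * f 1), f 0, f 1], ?_⟩, invFun := fun x => ![x.1 1, x.1 2], map_add' := ?_, map_smul' := ?_, left_inv := ?_, right_inv := ?_ }⟩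
    · simp only [mem_Lw, dot]
      simp at h1 ⊢
      linear_combination (-(w 1 * f 0 + w 2 * f 1)) * h1
    · intro f g; ext j; fin_cases j <;> simp <;> ring
    · intro f g; ext j; fin_cases j <;> simp <;> ring
    · intro f; ext j; fin_cases j <;> simp
    · rintro ⟨x, hx⟩
      rw [mem_Lw, dot] at hx
      ext j; fin_cases j <;> simp at h1 ⊢
      linear_combination x 0 * h1 - w 0 * hx
  · refine ⟨{ toFun := fun f => ⟨![f 0, -(w 1) * (w 0 * f 0 + w 2 * f 1), f 1], ?_⟩, invFun := fun x => ![x.1 0, x.1 2], map_add' := ?_, map_smul' := ?_, left_inv := ?_, right_inv := ?_ }⟩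
    · simp only [mem_Lw, dot]
      simp at h1 ⊢
      linear_combination (-(w 0 * f 0 + w 2 * f 1)) * h1
    · intro f g; ext j; fin_cases j <;> simp <;> ring
    · intro f g; ext j; fin_cases j <;> simp <;> ring
    · intro f; ext j; fin_cases j <;> simp
    · rintro ⟨x, hx⟩
      rw [mem_Lw, dot] at hx
      ext j; fin_cases j <;> simp at h1 ⊢
      linear_combination x 1 * h1 - w 1 * hx
  · refine ⟨{ toFun := fun f => ⟨![f 0, f 1, -(w 2) * (w 0 * f 0 + w 1 * f 1)], ?_⟩, invFun := fun x => ![x.1 0, x.1 1], map_add' := ?_, map_smul' := ?_, left_inv := ?_, right_inv := ?_ }⟩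
    · simp only [mem_Lw, dot]
      simp at h1 ⊢
      linear_combination (-(w 0 * f 0 + w 1 * f 1)) * h1
    · intro f g; ext j; fin_cases j <;> simp <;> ring
    · intro f g; ext j; fin_cases j <;> simp <;> ring
    · intro f; ext j; fin_cases j <;> simp
    · rintro ⟨x, hx⟩
      rw [mem_Lw, dot] at hx
      ext j; fin_cases j <;> simp at h1 ⊢
      linear_combination x 2 * h1 - w 2 * hx

theorem finH {H : Set (Submodule R4 V)} (hH : IsHyperoval H) : H.Finite :=
  Set.finite_of_ncard_ne_zero (by rw [hH.2.1]; norm_num)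

theorem le2 {H : Set (Submodule R4 V)} (hH : IsHyperoval H) (w : V) (hw : Uni w) :
    {P ∈ H | P ≤ Lw w}.ncard ≤ 2 := hH.2.2 _ (isLine_Lw w hw)

theorem arc {H : Set (Submodule R4 V)} (hH : IsHyperoval H) {P Q R : Submodule R4 V}
    (hP : P ∈ H) (hQ : Q ∈ H) (hR : R ∈ H) (hPQ : P ≠ Q) (hPR : P ≠ R) (hQR : Q ≠ R)
    (w : V) (hw : Uni w) (h1 : P ≤ Lw w) (h2 : Q ≤ Lw w) (h3 : R ≤ Lw w) : False := by
  have h := le2 hH w hw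
  have hs : ({P, Q, R} : Set (Submodule R4 V)) ⊆ {P ∈ H | P ≤ Lw w} := by
    rintro X (rfl | rfl | rfl)
    exacts [⟨hP, h1⟩, ⟨hQ, h2⟩, ⟨hR, h3⟩]
  have h' := Set.ncard_le_ncard hs ((finH hH).subset fun _ h => h.1)
  rw [Set.ncard_eq_three.2 ⟨P, Q, R, hPQ, hPR, hQR, rfl⟩] at h'
  omega

theorem arcN {H : Set (Submodule R4 V)} (hH : IsHyperoval H) {a b c : ℕ × ℕ × ℕ}
    (ha : Submodule.span R4 {toV a} ∈ H) (hb : Submodule.span R4 {toV b} ∈ H)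
    (hc : Submodule.span R4 {toV c} ∈ H)
    (hab : Submodule.span R4 {toV a} ≠ Submodule.span R4 {toV b})
    (hac : Submodule.span R4 {toV a} ≠ Submodule.span R4 {toV c})
    (hbc : Submodule.span R4 {toV b} ≠ Submodule.span R4 {toV c}) : goodN a b c = true := by
  rw [goodN, List.all_eq_true]
  intro w hw
  by_contra h
  simp only [Bool.not_eq_true, Bool.not_eq_false', Bool.and_eq_true] at h
  have hh := fun x => (span_le_Lw (toV w) (toV x)).trans (dot_toV w x)
  exact arc hH ha hb hc hab hac hbc (toV w) (funcs_uni w hw) ((hh _).2 h.1) ((hh _).2 h.2.1)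
    ((hh _).2 h.2.2)

theorem cover_aux : ∀ a b c x y z : R4, (a = 1 ∨ a = 3) → (x = 1 ∨ x = 3 ∨ y = 1 ∨ y = 3 ∨ z = 1 ∨ z = 3) →
    (a * x + b * y + c * z = 0 ∨ a * x + b * y + c * z = 2) →
    a * x + b * y + c * z = 0 ∨ a * x + (b + 2) * y + c * z = 0 ∨
      a * x + b * y + (c + 2) * z = 0 := by
  decide +kernel

/-- Three lines covering a neighbour class of lines. -/
theorem cover (w : V) (hw : Uni w) : ∃ w₂ w₃ : V, Uni w₂ ∧ Uni w₃ ∧ ∀ v : V, Uni v →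
      (dot w v = 0 ∨ dot w v = 2) → dot w v = 0 ∨ dot w₂ v = 0 ∨ dot w₃ v = 0 := by
  obtain ⟨i, hi⟩ := hw
  fin_cases i
  · refine ⟨![w 0, w 1 + 2, w 2], ![w 0, w 1, w 2 + 2], ⟨0, hi⟩, ⟨0, hi⟩, ?_⟩
    rintro v ⟨j, hj⟩ h
    rw [isUnit_iff4] at hi hj
    have := cover_aux (w 0) (w 1) (w 2) (v 0) (v 1) (v 2) hi (by fin_cases j <;> simp at hj <;> tauto) h
    simpa [dot] using this
  · refine ⟨![w 0 + 2, w 1, w 2], ![w 0, w 1, w 2 + 2], ⟨1, hi⟩, ⟨1, hi⟩, ?_⟩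
    rintro v ⟨j, hj⟩ h
    rw [isUnit_iff4] at hi hj
    have := cover_aux (w 1) (w 0) (w 2) (v 1) (v 0) (v 2) hi (by fin_cases j <;> simp at hj <;> tauto)
      (by simpa [dot, add_comm, add_left_comm] using h)
    simpa [dot, add_comm (_ * v 0)] using this
  · refine ⟨![w 0 + 2, w 1, w 2], ![w 0, w 1 + 2, w 2], ⟨2, hi⟩, ⟨2, hi⟩, ?_⟩
    rintro v ⟨j, hj⟩ h
    rw [isUnit_iff4] at hi hj
    have e : ∀ a b c : R4, a + b + c = c + a + b := fun a b c => by ring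
    have := cover_aux (w 2) (w 0) (w 1) (v 2) (v 0) (v 1) hi (by fin_cases j <;> simp at hj <;> tauto)
      (by rw [dot, e] at h; exact h)
    rw [← e (w 0 * v 0), ← e ((w 0 + 2) * v 0), ← e (w 0 * v 0)] at this
    simpa [dot] using this

theorem exists_off {H : Set (Submodule R4 V)} (hH : IsHyperoval H) (w : V) (hw : Uni w) :
    ∃ v, Uni v ∧ Submodule.span R4 {v} ∈ H ∧ ¬ (dot w v = 0 ∨ dot w v = 2) := by
  by_contra! hcon
  obtain ⟨w₂, w₃, hw2, hw3, hc⟩ := cover w hw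
  have hsub : H ⊆ {P ∈ H | P ≤ Lw w} ∪ ({P ∈ H | P ≤ Lw w₂} ∪ {P ∈ H | P ≤ Lw w₃}) := by
    intro P hP
    obtain ⟨v, hv, rfl⟩ := hH.1 P hP
    rcases hc v hv (by
      by_cases h0 : dot w v = 0
      · exact Or.inl h0
      · have := hcon v hv hP
        tauto) with h | h | h
    · exact Or.inl ⟨hP, (span_le_Lw _ _).2 h⟩
    · exact Or.inr (Or.inl ⟨hP, (span_le_Lw _ _).2 h⟩)
    · exact Or.inr (Or.inr ⟨hP, (span_le_Lw _ _).2 h⟩)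
  have hf : ∀ u, {P ∈ H | P ≤ Lw u}.Finite := fun u => (finH hH).subset fun _ h => h.1
  have h1 := Set.ncard_le_ncard hsub ((hf _).union ((hf _).union (hf _)))
  have h2 := Set.ncard_union_le {P ∈ H | P ≤ Lw w} ({P ∈ H | P ≤ Lw w₂} ∪ {P ∈ H | P ≤ Lw w₃})
  have h3 := Set.ncard_union_le {P ∈ H | P ≤ Lw w₂} {P ∈ H | P ≤ Lw w₃}
  have e1 := le2 hH w hw
  have e2 := le2 hH w₂ hw2
  have e3 := le2 hH w₃ hw3
  have := hH.2.1
  omega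

theorem mapPt_mul (g h : GL3) (P : Submodule R4 V) : mapPt (g * h) P = mapPt g (mapPt h P) := by
  unfold mapPt
  rw [← Submodule.map_comp, ← Matrix.mulVecLin_mul]
  rfl

theorem mapPt_one (P : Submodule R4 V) : mapPt 1 P = P := by
  unfold mapPt
  simp

theorem mapPt_span (g : GL3) (v : V) :
    mapPt g (Submodule.span R4 {v}) = Submodule.span R4 {(g : Matrix (Fin 3) (Fin 3) R4).mulVec v} := by
  unfold mapPt
  rw [Submodule.map_span, Set.image_singleton]
  rfl

theorem mapPt_inj (g : GL3) : Function.Injective (mapPt g) := by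
  intro P Q h
  have := congrArg (mapPt g⁻¹) h
  rwa [← mapPt_mul, ← mapPt_mul, inv_mul_cancel, mapPt_one, mapPt_one] at this

theorem mulVec_inj (g : GL3) : Function.Injective (g : Matrix (Fin 3) (Fin 3) R4).mulVecLin := by
  intro x y h
  have := congrArg ((g⁻¹ : GL3) : Matrix (Fin 3) (Fin 3) R4).mulVec h
  simp only [Matrix.mulVecLin_apply, Matrix.mulVec_mulVec] at this
  rw [← Units.val_mul, inv_mul_cancel] at this
  simpa using this

theorem mapPt_mono (g : GL3) {P Q : Submodule R4 V} (h : P ≤ Q) : mapPt g P ≤ mapPt g Q :=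
  Submodule.map_mono h

theorem two_smul_uni : ∀ v : V, Uni v ↔ (2 : R4) • v ≠ 0 := by
  have key : ∀ x : R4, (x = 1 ∨ x = 3) ↔ 2 * x ≠ 0 := by decide +kernel
  intro v
  simp only [Uni, isUnit_iff4, key]
  rw [Ne, funext_iff, not_forall]
  rfl

theorem uni_map (g : GL3) (v : V) (hv : Uni v) : Uni ((g : Matrix (Fin 3) (Fin 3) R4).mulVec v) := by
  rw [two_smul_uni] at hv ⊢
  rw [← Matrix.mulVec_smul]
  intro h
  exact hv (mulVec_inj g (by rw [Matrix.mulVecLin_apply, h, map_zero]))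

theorem isLine_map (g : GL3) (L : Submodule R4 V) (hL : IsLine L) : IsLine (mapPt g L) := by
  obtain ⟨e⟩ := hL
  exact ⟨e.trans (Submodule.equivMapOfInjective _ (mulVec_inj g) L)⟩

theorem hyp_map (g : GL3) {H : Set (Submodule R4 V)} (hH : IsHyperoval H) :
    IsHyperoval (mapPt g '' H) := by
  refine ⟨?_, ?_, ?_⟩
  · rintro _ ⟨P, hP, rfl⟩
    obtain ⟨v, hv, rfl⟩ := hH.1 P hP
    exact ⟨_, uni_map g v hv, mapPt_span g v⟩
  · rw [← hH.2.1]
    exact Set.ncard_image_of_injective H (mapPt_inj g)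
  · intro L hL
    have h := hH.2.2 _ (isLine_map g⁻¹ L hL)
    have hs : {P ∈ mapPt g '' H | P ≤ L} ⊆ mapPt g '' {P ∈ H | P ≤ mapPt g⁻¹ L} := by
      rintro _ ⟨⟨P, hP, rfl⟩, hle⟩
      refine ⟨P, ⟨hP, ?_⟩, rfl⟩
      have := mapPt_mono g⁻¹ hle
      rwa [← mapPt_mul, inv_mul_cancel, mapPt_one] at this
    have h1 := Set.ncard_le_ncard hs (((finH hH).subset fun _ h => h.1).image _)
    exact h1.trans ((Set.ncard_image_of_injective _ (mapPt_inj g)).le.trans h)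

/-- A hyperoval contains a basis. -/
theorem exists_basis {H : Set (Submodule R4 V)} (hH : IsHyperoval H) :
    ∃ p q r : V, Submodule.span R4 {p} ∈ H ∧ Submodule.span R4 {q} ∈ H ∧
      Submodule.span R4 {r} ∈ H ∧ IsUnit (Matrix.of ![p, q, r]).det := by
  have hev : ∀ x : R4, ¬ (x = 0 ∨ x = 2) ↔ (x = 1 ∨ x = 3) := by decide +kernel
  have hne : H.Nonempty := by
    rw [← Set.ncard_pos (finH hH), hH.2.1]; norm_num
  obtain ⟨P, hP⟩ := hne
  obtain ⟨p, hp, rfl⟩ := hH.1 P hP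
  -- a functional with even value on p
  obtain ⟨q, hq, hqH, i, hi⟩ : ∃ q, Uni q ∧ Submodule.span R4 {q} ∈ H ∧
      Uni ![p 1 * q 2 - p 2 * q 1, p 2 * q 0 - p 0 * q 2, p 0 * q 1 - p 1 * q 0] := by
    obtain ⟨j, hj⟩ := hp
    have main : ∀ w : V, Uni w → (∀ q : V, dot w q = p 1 * q 2 - p 2 * q 1 ∨
        dot w q = p 0 * q 1 - p 1 * q 0) → ∃ q, Uni q ∧ Submodule.span R4 {q} ∈ H ∧
        Uni ![p 1 * q 2 - p 2 * q 1, p 2 * q 0 - p 0 * q 2, p 0 * q 1 - p 1 * q 0] := by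
      intro w hw hdot
      obtain ⟨q, hq, hqH, hd⟩ := exists_off hH w hw
      rw [hev, ← isUnit_iff4] at hd
      refine ⟨q, hq, hqH, ?_⟩
      rcases hdot q with h | h <;> rw [h] at hd
      · exact ⟨0, hd⟩
      · exact ⟨2, hd⟩
    fin_cases j
    · exact main ![-p 1, p 0, 0] ⟨1, hj⟩ fun q => Or.inr (by simp [dot]; ring)
    · exact main ![-p 1, p 0, 0] ⟨0, hj.neg⟩ fun q => Or.inr (by simp [dot]; ring)
    · exact main ![0, -p 2, p 1] ⟨1, hj.neg⟩ fun q => Or.inl (by simp [dot]; ring)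
  obtain ⟨r, hr, hrH, hd⟩ := exists_off hH _ ⟨i, hi⟩
  refine ⟨p, q, r, hP, hqH, hrH, ?_⟩
  rw [hev, ← isUnit_iff4] at hd
  convert hd using 1
  simp [Matrix.det_fin_three, dot]
  ring

abbrev S (a : ℕ × ℕ × ℕ) : Submodule R4 V := Submodule.span R4 {toV a}

def list0 : List (ℕ × ℕ × ℕ) := [(1, 0, 0), (0, 1, 0), (0, 0, 1)] ++ target 1 1

def H0 : Set (Submodule R4 V) := S '' {x | x ∈ list0}

theorem H0_ncard : H0.ncard ≤ 7 := by
  have h : {x | x ∈ list0} = (list0.toFinset : Set (ℕ × ℕ × ℕ)) := by ext; simp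
  unfold H0
  rw [h]
  refine (Set.ncard_image_le (Finset.finite_toSet _)).trans ?_
  rw [Set.ncard_coe_finset]
  decide

theorem H0_finite : H0.Finite := by
  have h : {x | x ∈ list0} = (list0.toFinset : Set (ℕ × ℕ × ℕ)) := by ext; simp
  unfold H0
  rw [h]
  exact (Finset.finite_toSet _).image _

theorem S_ne {a b w : ℕ × ℕ × ℕ} (h1 : isZ w a = true) (h2 : isZ w b = false) : S a ≠ S b := by
  intro h
  have h3 := (span_le_Lw (toV w) (toV a)).2 ((dot_toV _ _).2 h1)
  change S a ≤ _ at h3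
  rw [h] at h3
  have := (dot_toV _ _).1 ((span_le_Lw _ _).1 h3)
  rw [h2] at this
  exact Bool.noConfusion this

theorem diag_tab : ∀ s ∈ [1, 3], ∀ t ∈ [1, 3],
    ∀ x ∈ [(1, 0, 0), (0, 1, 0), (0, 0, 1)] ++ target s t, ∃ y ∈ list0,
    ∃ u ∈ [(1 : R4), 3], u • toV x = ![(y.1 : R4), s * y.2.1, t * y.2.2] := by
  decide +kernel

theorem cand_tab : ∀ x y z : R4, x ≠ 0 → y ≠ 0 → z ≠ 0 →
    (x = 1 ∨ x = 3 ∨ y = 1 ∨ y = 3 ∨ z = 1 ∨ z = 3) →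
    ∃ a ∈ cands, ∃ u ∈ [(1 : R4), 3], u • toV a = ![x, y, z] := by
  decide +kernel

theorem span_u {u : R4} (hu : u ∈ [(1 : R4), 3]) (v : V) :
    Submodule.span R4 {u • v} = Submodule.span R4 {v} := by
  have : IsUnit u := by
    rw [isUnit_iff4]; simpa using hu
  exact Submodule.span_singleton_smul_eq this v

theorem exists_four {α : Type} {K : Set α} (h : K.ncard = 4) : ∃ a b c d, a ∈ K ∧ b ∈ K ∧ c ∈ K ∧
    d ∈ K ∧ a ≠ b ∧ a ≠ c ∧ a ≠ d ∧ b ≠ c ∧ b ≠ d ∧ c ≠ d ∧ ∀ x ∈ K, x = a ∨ x = b ∨ x = c ∨ x = d := by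
  obtain ⟨a, t, hat, rfl, ht⟩ := Set.eq_insert_of_ncard_eq_succ h
  obtain ⟨b, c, d, hbc, hbd, hcd, rfl⟩ := Set.ncard_eq_three.1 ht
  simp only [Set.mem_insert_iff, Set.mem_singleton_iff, not_or] at hat
  refine ⟨a, b, c, d, ?_⟩
  simp
  tauto

theorem normal_form {H : Set (Submodule R4 V)} (hH : IsHyperoval H) (e1 : S (1, 0, 0) ∈ H)
    (e2 : S (0, 1, 0) ∈ H) (e3 : S (0, 0, 1) ∈ H) : ∃ g : GL3, mapPt g '' H0 = H := by
  have n12 : S (1, 0, 0) ≠ S (0, 1, 0) := S_ne (w := (0, 1, 0)) (by decide) (by decide)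
  have n13 : S (1, 0, 0) ≠ S (0, 0, 1) := S_ne (w := (0, 0, 1)) (by decide) (by decide)
  have n23 : S (0, 1, 0) ≠ S (0, 0, 1) := S_ne (w := (0, 0, 1)) (by decide) (by decide)
  have hK : (H \ {S (1, 0, 0), S (0, 1, 0), S (0, 0, 1)}).ncard = 4 := by
    have h3 : ({S (1, 0, 0), S (0, 1, 0), S (0, 0, 1)} : Set (Submodule R4 V)).ncard = 3 :=
      Set.ncard_eq_three.2 ⟨_, _, _, n12, n13, n23, rfl⟩
    have hs : ({S (1, 0, 0), S (0, 1, 0), S (0, 0, 1)} : Set (Submodule R4 V)) ⊆ H := by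
      rintro X (rfl | rfl | rfl) <;> assumption
    have := Set.ncard_sdiff_add_ncard_of_subset hs (finH hH)
    have h7 : H.ncard = 7 := hH.2.1
    omega
  have rep : ∀ P ∈ H \ {S (1, 0, 0), S (0, 1, 0), S (0, 0, 1)}, ∃ a ∈ cands, P = S a ∧ S a ∈ H ∧
      S a ≠ S (1, 0, 0) ∧ S a ≠ S (0, 1, 0) ∧ S a ≠ S (0, 0, 1) := by
    rintro P ⟨hP, hPn⟩
    simp only [Set.mem_insert_iff, Set.mem_singleton_iff, not_or] at hPn
    obtain ⟨m1, m2, m3⟩ := hPn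
    obtain ⟨v, ⟨j, hj⟩, hv⟩ := hH.1 P hP
    have hz : ∀ w : ℕ × ℕ × ℕ, dot (toV w) v = 0 → P ≤ Lw (toV w) := by
      intro w h
      rw [hv]
      exact (span_le_Lw _ _).2 h
    have hz' : ∀ w x : ℕ × ℕ × ℕ, isZ w x = true → S x ≤ Lw (toV w) := fun w x h =>
      (span_le_Lw _ _).2 ((dot_toV _ _).2 h)
    have v0 : v 0 ≠ 0 := fun h => arc hH hP e2 e3 m2 m3 n23 (toV (1, 0, 0))
      (funcs_uni _ (by decide)) (hz _ (by simp [dot, toV, h])) (hz' _ _ (by decide))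
      (hz' _ _ (by decide))
    have v1 : v 1 ≠ 0 := fun h => arc hH hP e1 e3 m1 m3 n13 (toV (0, 1, 0))
      (funcs_uni _ (by decide)) (hz _ (by simp [dot, toV, h])) (hz' _ _ (by decide))
      (hz' _ _ (by decide))
    have v2 : v 2 ≠ 0 := fun h => arc hH hP e1 e2 m1 m2 n12 (toV (0, 0, 1))
      (funcs_uni _ (by decide)) (hz _ (by simp [dot, toV, h])) (hz' _ _ (by decide))
      (hz' _ _ (by decide))
    rw [isUnit_iff4] at hj
    obtain ⟨a, ha, u, hu, hau⟩ := cand_tab (v 0) (v 1) (v 2) v0 v1 v2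
      (by fin_cases j <;> simp at hj <;> tauto)
    have hv' : ![v 0, v 1, v 2] = v := by ext j; fin_cases j <;> rfl
    have hPa : P = S a := by
      rw [hv, ← hv', ← hau, span_u hu]
    exact ⟨a, ha, hPa, hPa ▸ hP, hPa ▸ m1, hPa ▸ m2, hPa ▸ m3⟩
  obtain ⟨A, B, C, D, hA, hB, hC, hD, hAB, hAC, hAD, hBC, hBD, hCD, hall⟩ := exists_four hK
  obtain ⟨a, ca, rfl, aH, a1, a2, a3⟩ := rep A hA
  obtain ⟨b, cb, rfl, bH, b1, b2, b3⟩ := rep B hB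
  obtain ⟨c, cc, rfl, cH, c1, c2, c3⟩ := rep C hC
  obtain ⟨d, cd, rfl, dH, d1, d2, d3⟩ := rep D hD
  have g3 : ∀ {x y : ℕ × ℕ × ℕ}, S x ∈ H → S y ∈ H → S x ≠ S y →
      S x ≠ S (1, 0, 0) → S x ≠ S (0, 1, 0) → S x ≠ S (0, 0, 1) →
      S y ≠ S (1, 0, 0) → S y ≠ S (0, 1, 0) → S y ≠ S (0, 0, 1) → good3 x y = true := by
    intro x y hx hy hxy x1 x2 x3 y1 y2 y3
    simp only [good3, Bool.and_eq_true]
    exact ⟨arcN hH hx hy e1 hxy x1 y1, arcN hH hx hy e2 hxy x2 y2, arcN hH hx hy e3 hxy x3 y3⟩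
  obtain ⟨s, hs, t, ht, hst⟩ := core ca cb cc cd (g3 aH bH hAB a1 a2 a3 b1 b2 b3)
    (g3 aH cH hAC a1 a2 a3 c1 c2 c3) (g3 bH cH hBC b1 b2 b3 c1 c2 c3)
    (arcN hH aH bH cH hAB hAC hBC) (g3 aH dH hAD a1 a2 a3 d1 d2 d3)
    (g3 bH dH hBD b1 b2 b3 d1 d2 d3) (g3 cH dH hCD c1 c2 c3 d1 d2 d3)
    (arcN hH aH bH dH hAB hAD hBD) (arcN hH aH cH dH hAC hAD hCD)
    (arcN hH bH cH dH hBC hBD hCD)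
  have hsq : ∀ x ∈ [1, 3], ((x : ℕ) : R4) * x = 1 := by decide
  let M : Matrix (Fin 3) (Fin 3) R4 := Matrix.diagonal ![1, (s : R4), (t : R4)]
  have hM : M * M = 1 := by
    rw [Matrix.diagonal_mul_diagonal, ← Matrix.diagonal_one]
    congr 1
    ext j
    fin_cases j
    · simp
    · simpa using hsq s hs
    · simpa using hsq t ht
  let g : GL3 := ⟨M, M, hM, hM⟩
  have hmem : ∀ x ∈ [(1, 0, 0), (0, 1, 0), (0, 0, 1)] ++ target s t, S x ∈ mapPt g '' H0 := by
    intro x hx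
    obtain ⟨y, hy, u, hu, hxy⟩ := diag_tab s hs t ht x hx
    refine ⟨S y, ⟨y, hy, rfl⟩, ?_⟩
    rw [mapPt_span, S, ← span_u hu (toV x), hxy]
    congr 2
    ext j
    change (M.mulVec (toV y)) j = _
    rw [Matrix.mulVec_diagonal]
    fin_cases j <;> simp [toV]
  refine ⟨g, (Set.eq_of_subset_of_ncard_le ?_ ?_ (H0_finite.image _)).symm⟩
  · intro P hP
    by_cases hPE : P ∈ ({S (1, 0, 0), S (0, 1, 0), S (0, 0, 1)} : Set (Submodule R4 V))
    · rcases hPE with rfl | rfl | rfl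
      · exact hmem _ (by simp)
      · exact hmem _ (by simp)
      · exact hmem _ (by simp)
    · rcases hall P ⟨hP, hPE⟩ with rfl | rfl | rfl | rfl
      · exact hmem _ (List.mem_append_right _ (hst _ (by simp)))
      · exact hmem _ (List.mem_append_right _ (hst _ (by simp)))
      · exact hmem _ (List.mem_append_right _ (hst _ (by simp)))
      · exact hmem _ (List.mem_append_right _ (hst _ (by simp)))
  · have h7 : H.ncard = 7 := hH.2.1
    rw [h7]
    exact (Set.ncard_image_le H0_finite).trans H0_ncard

theorem all_H0 {H : Set (Submodule R4 V)} (hH : IsHyperoval H) : ∃ g : GL3, mapPt g '' H0 = H := by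
  obtain ⟨p, q, r, hp, hq, hr, hu⟩ := exists_basis hH
  rw [← Matrix.det_transpose] at hu
  let A : GL3 := Matrix.GeneralLinearGroup.mk'' (Matrix.of ![p, q, r]).transpose hu
  have hA : (A : Matrix (Fin 3) (Fin 3) R4) = (Matrix.of ![p, q, r]).transpose := rfl
  have m1 : mapPt A (S (1, 0, 0)) = Submodule.span R4 {p} := by
    rw [mapPt_span, hA]
    congr 2
    ext j
    simp [Matrix.mulVec, dotProduct, Fin.sum_univ_three, toV]
  have m2 : mapPt A (S (0, 1, 0)) = Submodule.span R4 {q} := by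
    rw [mapPt_span, hA]
    congr 2
    ext j
    simp [Matrix.mulVec, dotProduct, Fin.sum_univ_three, toV]
  have m3 : mapPt A (S (0, 0, 1)) = Submodule.span R4 {r} := by
    rw [mapPt_span, hA]
    congr 2
    ext j
    simp [Matrix.mulVec, dotProduct, Fin.sum_univ_three, toV]
  have hinv : ∀ P, mapPt A P ∈ H → P ∈ mapPt A⁻¹ '' H := fun P hP =>
    ⟨_, hP, by rw [← mapPt_mul, inv_mul_cancel, mapPt_one]⟩
  obtain ⟨g, hg⟩ := normal_form (hyp_map A⁻¹ hH) (hinv _ (m1 ▸ hp)) (hinv _ (m2 ▸ hq))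
    (hinv _ (m3 ▸ hr))
  refine ⟨A * g, ?_⟩
  have := congrArg (fun X => mapPt A '' X) hg
  simp only [Set.image_image, ← mapPt_mul, mul_inv_cancel, mapPt_one, Set.image_id'] at this
  exact this

end HypAux
/-- PGL(3, ℤ/4ℤ) acts transitively on the set of hyperovals of PHG(2, ℤ/4ℤ). -/
theorem pgl_transitive_on_hyperovals :
    ∀ H₁ H₂ : Set (Submodule R4 (Fin 3 → R4)), IsHyperoval H₁ → IsHyperoval H₂ →
      ∃ g : PGL3, pglMapSet g H₁ = H₂ := by
  intro H₁ H₂ h₁ h₂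
  obtain ⟨g₁, rfl⟩ := HypAux.all_H0 h₁
  obtain ⟨g₂, rfl⟩ := HypAux.all_H0 h₂
  refine ⟨((g₂ * g₁⁻¹ : GL3) : PGL3), ?_⟩
  have h : pglMapPt ((g₂ * g₁⁻¹ : GL3) : PGL3) = mapPt (g₂ * g₁⁻¹) := rfl
  rw [pglMapSet, h]
  simp only [Set.image_image, ← HypAux.mapPt_mul, inv_mul_cancel_right]
end

section
/- For every hyperoval H of PHG(2, ℤ/4ℤ), the setwise stabilizer of H in PGL(3, ℤ/4ℤ) has order 168. -/
namespace HypOval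

abbrev V4 := Fin 3 → R4

/-- Coordinate dot product. -/
def dt (u v : V4) : R4 := u 0 * v 0 + u 1 * v 1 + u 2 * v 2

/-- Normalized unimodular vectors: the first unit coordinate equals 1. -/
def nrm (v : V4) : Prop :=
  v 0 = 1 ∨ (2 * v 0 = 0 ∧ (v 1 = 1 ∨ (2 * v 1 = 0 ∧ v 2 = 1)))

instance : DecidablePred nrm := fun v => by unfold nrm; infer_instance

def pts : Finset V4 := Finset.univ.filter nrm

def cls (v : V4) : V4 := ![2 * v 0, 2 * v 1, 2 * v 2]

def T0 : Finset V4 :=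
  {![1,0,0], ![0,1,0], ![0,0,1], ![1,1,1], ![1,3,2], ![1,2,3], ![2,1,3]}

def S0 : Finset V4 := T0 ∪ T0.image (fun v => ![- v 0, - v 1, - v 2])

lemma mem_pts {v : V4} : v ∈ pts ↔ nrm v := by simp [pts]

lemma two_lines : ∀ v ∈ pts, ∀ w ∈ pts, v ≠ w →
    1 + (if cls v = cls w then 1 else 0) ≤
      (pts.filter (fun u => dt u v = 0 ∧ dt u w = 0)).card := by
  decide +kernel

lemma six_lines : ∀ v ∈ pts, (pts.filter (fun u => dt u v = 0)).card = 6 := by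
  decide +kernel

lemma card_cls : (pts.image cls).card = 7 := by decide +kernel

lemma T0_sub : T0 ⊆ pts := by decide +kernel

lemma T0_card : T0.card = 7 := by decide +kernel

lemma frame : ∀ a ∈ pts.filter (fun v => cls v = ![2,0,0]),
    ∀ b ∈ pts.filter (fun v => cls v = ![0,2,0]),
    ∀ c ∈ pts.filter (fun v => cls v = ![0,0,2]),
    ∀ d ∈ pts.filter (fun v => cls v = ![2,2,2]),
    ∃ x ∈ ({1,3} : Finset R4), ∃ y ∈ ({1,3} : Finset R4), ∃ z ∈ ({1,3} : Finset R4),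
      ∀ i, x * a i + y * b i + z * c i = d i := by
  decide +kernel

lemma frame_det : ∀ a ∈ pts.filter (fun v => cls v = ![2,0,0]),
    ∀ b ∈ pts.filter (fun v => cls v = ![0,2,0]),
    ∀ c ∈ pts.filter (fun v => cls v = ![0,0,2]),
    ∀ x ∈ ({1,3} : Finset R4), ∀ y ∈ ({1,3} : Finset R4), ∀ z ∈ ({1,3} : Finset R4),
    2 * (x * a 0 * (y * b 1) * (z * c 2) - x * a 0 * (z * c 1) * (y * b 2)
     - y * b 0 * (x * a 1) * (z * c 2) + y * b 0 * (z * c 1) * (x * a 2)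
     + z * c 0 * (x * a 1) * (y * b 2) - z * c 0 * (y * b 1) * (x * a 2)) = 2 := by
  decide +kernel

def det3 (a b c : V4) : R4 :=
  a 0 * b 1 * c 2 - a 0 * c 1 * b 2 - b 0 * a 1 * c 2 + b 0 * c 1 * a 2
    + c 0 * a 1 * b 2 - c 0 * b 1 * a 2

/-- Fast membership test for `S0`, by a bit mask. -/
def inS (x y z : R4) : Bool := Nat.testBit 9385818833754853402 (16 * x.val + 4 * y.val + z.val)

lemma inS_iff : ∀ x y z : R4, inS x y z = true ↔ (![x, y, z] : V4) ∈ S0 := by decide +kernel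

def F : Finset (V4 × V4 × V4) := (T0 ×ˢ S0 ×ˢ S0).filter (fun p =>
  inS (p.1 0 + p.2.1 0 + p.2.2 0) (p.1 1 + p.2.1 1 + p.2.2 1)
    (p.1 2 + p.2.1 2 + p.2.2 2) = true ∧
  2 * det3 p.1 p.2.1 p.2.2 = 2 ∧
   ∀ v ∈ T0, inS (p.1 0 * v 0 + p.2.1 0 * v 1 + p.2.2 0 * v 2)
      (p.1 1 * v 0 + p.2.1 1 * v 1 + p.2.2 1 * v 2)
      (p.1 2 * v 0 + p.2.1 2 * v 1 + p.2.2 2 * v 2) = true)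

lemma F_card : F.card = 168 := by decide +kernel


lemma vec_eta (v : V4) : ![v 0, v 1, v 2] = v := by
  ext i; fin_cases i <;> rfl

abbrev sp (v : V4) : Submodule R4 V4 := Submodule.span R4 {v}

/-- The linear functional `dt u`. -/
def dtL (u : V4) : V4 →ₗ[R4] R4 where
  toFun := dt u
  map_add' := by intro x y; simp only [dt, Pi.add_apply]; ring
  map_smul' := by intro c x; simp only [dt, Pi.smul_apply, smul_eq_mul, RingHom.id_apply]; ring

def lin (u : V4) : Submodule R4 V4 := LinearMap.ker (dtL u)

lemma sp_le_lin (u v : V4) : sp v ≤ lin u ↔ dt u v = 0 := by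
  rw [Submodule.span_singleton_le_iff_mem]; rfl

lemma isLine_of (L : Submodule R4 V4) (a b : V4) (ha : a ∈ L) (hb : b ∈ L)
    (hi : ∀ x y : R4, x • a + y • b = 0 → x = 0 ∧ y = 0)
    (hs : ∀ w ∈ L, ∃ x y : R4, x • a + y • b = w) : IsLine L := by
  let f : (Fin 2 → R4) →ₗ[R4] L :=
    { toFun := fun c => ⟨c 0 • a + c 1 • b, L.add_mem (L.smul_mem _ ha) (L.smul_mem _ hb)⟩
      map_add' := by
        intro x y; apply Subtype.ext
        simp only [Pi.add_apply, add_smul, Submodule.coe_add]; abel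
      map_smul' := by
        intro c x; apply Subtype.ext
        simp [mul_smul, smul_add] }
  refine ⟨LinearEquiv.ofBijective f ⟨?_, ?_⟩⟩
  · rw [← LinearMap.ker_eq_bot, LinearMap.ker_eq_bot']
    intro m hm
    have h1 : m 0 • a + m 1 • b = 0 := congrArg Subtype.val hm
    obtain ⟨h2, h3⟩ := hi _ _ h1
    ext i; fin_cases i <;> assumption
  · rintro ⟨w, hw⟩
    obtain ⟨x, y, h⟩ := hs w hw
    exact ⟨![x, y], Subtype.ext h⟩

lemma isLine_lin (u : V4) (hu : nrm u) : IsLine (lin u) := by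
  have key : u 0 = 1 ∨ u 1 = 1 ∨ u 2 = 1 := by unfold nrm at hu; tauto
  rcases key with h | h | h
  · refine isLine_of _ ![- u 1, 1, 0] ![- u 2, 0, 1] ?_ ?_ ?_ ?_
    · change dt _ _ = 0; simp [dt, h]
    · change dt _ _ = 0; simp [dt, h]
    · intro x y hxy
      have h1 := congrFun hxy 1
      have h2 := congrFun hxy 2
      simp at h1 h2; exact ⟨h1, h2⟩
    · intro w hw
      have hw : dt u w = 0 := hw
      refine ⟨w 1, w 2, ?_⟩
      simp only [dt, h] at hw
      ext i; fin_cases i <;> simp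
      linear_combination -hw
  · refine isLine_of _ ![1, - u 0, 0] ![0, - u 2, 1] ?_ ?_ ?_ ?_
    · change dt _ _ = 0; simp [dt, h]
    · change dt _ _ = 0; simp [dt, h]
    · intro x y hxy
      have h1 := congrFun hxy 0
      have h2 := congrFun hxy 2
      simp at h1 h2; exact ⟨h1, h2⟩
    · intro w hw
      have hw : dt u w = 0 := hw
      refine ⟨w 0, w 2, ?_⟩
      simp only [dt, h] at hw
      ext i; fin_cases i <;> simp
      linear_combination -hw
  · refine isLine_of _ ![1, 0, - u 0] ![0, 1, - u 1] ?_ ?_ ?_ ?_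
    · change dt _ _ = 0; simp [dt, h]
    · change dt _ _ = 0; simp [dt, h]
    · intro x y hxy
      have h1 := congrFun hxy 0
      have h2 := congrFun hxy 1
      simp at h1 h2; exact ⟨h1, h2⟩
    · intro w hw
      have hw : dt u w = 0 := hw
      refine ⟨w 0, w 1, ?_⟩
      simp only [dt, h] at hw
      ext i; fin_cases i <;> simp
      linear_combination -hw

lemma sp_inj_aux : ∀ v ∈ pts, ∀ r : R4, nrm ![r * v 0, r * v 1, r * v 2] →
    ![r * v 0, r * v 1, r * v 2] = v := by decide +kernel

lemma sp_inj {v w : V4} (hv : v ∈ pts) (hw : w ∈ pts) (h : sp v = sp w) : v = w := by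
  have : w ∈ sp v := h ▸ Submodule.mem_span_singleton_self w
  obtain ⟨r, rfl⟩ := Submodule.mem_span_singleton.1 this
  have e : r • v = ![r * v 0, r * v 1, r * v 2] := (vec_eta _).symm
  rw [e] at hw ⊢
  exact (sp_inj_aux v hv r (mem_pts.1 hw)).symm

lemma norm_aux : ∀ x y z : R4, (2 * x = 2 ∨ 2 * y = 2 ∨ 2 * z = 2) →
    nrm ![x, y, z] ∨ nrm ![-x, -y, -z] := by decide +kernel

lemma unit_aux : ∀ x y : R4, x * y = 1 → 2 * x = 2 := by decide +kernel

lemma unit_aux' : ∀ x : R4, 2 * x = 2 → x * x = 1 := by decide +kernel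

lemma sp_neg (v : V4) : sp (-v) = sp v := by
  rw [sp, ← Set.neg_singleton, Submodule.span_neg]

lemma point_rep {P : Submodule R4 V4} (h : IsPoint P) : ∃ v ∈ pts, P = sp v := by
  obtain ⟨v, ⟨i, hi⟩, rfl⟩ := h
  obtain ⟨s, hs⟩ := hi.exists_right_inv
  have h2 := unit_aux _ _ hs
  have : (2 * v 0 = 2 ∨ 2 * v 1 = 2 ∨ 2 * v 2 = 2) := by
    fin_cases i
    · exact Or.inl h2
    · exact Or.inr (Or.inl h2)
    · exact Or.inr (Or.inr h2)
  rcases norm_aux _ _ _ this with h | h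
  · exact ⟨v, mem_pts.2 (by rwa [vec_eta] at h), rfl⟩
  · refine ⟨-v, mem_pts.2 ?_, (sp_neg v).symm⟩
    have e : ![-v 0, -v 1, -v 2] = -v := vec_eta (-v)
    rwa [e] at h

open Classical in
/-- Normalized representatives of a set of points. -/
noncomputable def rep (H : Set (Submodule R4 V4)) : Finset V4 := pts.filter (fun v => sp v ∈ H)

lemma mem_rep {H : Set (Submodule R4 V4)} {v : V4} : v ∈ rep H ↔ v ∈ pts ∧ sp v ∈ H := by
  simp [rep]

lemma image_rep {H : Set (Submodule R4 V4)} (h : ∀ P ∈ H, IsPoint P) :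
    sp '' (rep H : Set V4) = H := by
  ext P; constructor
  · rintro ⟨v, hv, rfl⟩; exact (mem_rep.1 hv).2
  · intro hP
    obtain ⟨v, hv, rfl⟩ := point_rep (h P hP)
    exact ⟨v, mem_rep.2 ⟨hv, hP⟩, rfl⟩

lemma injOn_pts {s : Set V4} (hs : s ⊆ pts) : Set.InjOn sp s :=
  fun _ ha _ hb h => sp_inj (hs ha) (hs hb) h

lemma rep_card {H : Set (Submodule R4 V4)} (h : IsHyperoval H) : (rep H).card = 7 := by
  have h1 := h.2.1
  rw [← image_rep h.1, Set.ncard_image_of_injOn (injOn_pts fun v hv => (mem_rep.1 hv).1),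
    Set.ncard_coe_finset] at h1
  exact h1

lemma rep_line {H : Set (Submodule R4 V4)} (h : IsHyperoval H) {u : V4} (hu : u ∈ pts) :
    ((rep H).filter (fun v => dt u v = 0)).card ≤ 2 := by
  have h1 := h.2.2 (lin u) (isLine_lin u (mem_pts.1 hu))
  have h2 : {P ∈ H | P ≤ lin u} = sp '' ((rep H).filter (fun v => dt u v = 0) : Finset V4) := by
    ext P; constructor
    · rintro ⟨hP, hl⟩
      obtain ⟨v, hv, rfl⟩ := point_rep (h.1 P hP)
      exact ⟨v, by simpa [mem_rep] using ⟨⟨hv, hP⟩, (sp_le_lin _ _).1 hl⟩, rfl⟩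
    · rintro ⟨v, hv, rfl⟩
      rw [Finset.mem_coe, Finset.mem_filter, mem_rep] at hv
      exact ⟨hv.1.2, (sp_le_lin _ _).2 hv.2⟩
  rw [h2, Set.ncard_image_of_injOn, Set.ncard_coe_finset] at h1
  · exact h1
  · apply injOn_pts
    intro v hv
    rw [Finset.mem_coe, Finset.mem_filter, mem_rep] at hv
    exact hv.1.1

lemma cls_inj {T : Finset V4} (hT : T ⊆ pts) (h7 : T.card = 7)
    (hl : ∀ u ∈ pts, (T.filter (fun v => dt u v = 0)).card ≤ 2) :
    Set.InjOn cls (T : Set V4) := by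
  intro v hv w hw hvw
  by_contra hne
  have hv : v ∈ T := hv
  have hw : w ∈ T := hw
  have dc := Finset.sum_card_bipartiteAbove_eq_sum_card_bipartiteBelow
    (s := T.erase v) (t := pts.filter (fun u => dt u v = 0)) (fun q u => dt u q = 0)
  have ub : ∑ u ∈ pts.filter (fun u => dt u v = 0),
      ((T.erase v).bipartiteBelow (fun q u => dt u q = 0) u).card ≤ 6 := by
    rw [← six_lines v (hT hv), Finset.card_eq_sum_ones]
    apply Finset.sum_le_sum
    intro u hu
    rw [Finset.mem_filter] at hu
    have h1 := hl u hu.1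
    have h2 : (T.erase v).bipartiteBelow (fun q u => dt u q = 0) u
        = (T.filter (fun q => dt u q = 0)).erase v := by
      ext q; simp [Finset.bipartiteBelow, and_assoc]
    rw [h2, Finset.card_erase_of_mem (by simp [hv, hu.2])]
    omega
  have lb : ∑ q ∈ T.erase v, (1 + (if cls v = cls q then 1 else 0)) ≤ ∑ q ∈ T.erase v,
      ((pts.filter (fun u => dt u v = 0)).bipartiteAbove (fun q u => dt u q = 0) q).card := by
    apply Finset.sum_le_sum
    intro q hq
    rw [Finset.mem_erase] at hq
    have := two_lines v (hT hv) q (hT hq.2) hq.1.symm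
    rwa [Finset.bipartiteAbove, Finset.filter_filter]
  rw [Finset.sum_add_distrib, ← Finset.card_eq_sum_ones, Finset.card_erase_of_mem hv, h7] at lb
  have : 1 ≤ ∑ q ∈ T.erase v, (if cls v = cls q then 1 else 0) := by
    have := Finset.single_le_sum (f := fun q => (if cls v = cls q then 1 else 0))
      (fun _ _ => Nat.zero_le _) (Finset.mem_erase.2 ⟨Ne.symm hne, hw⟩)
    simpa [hvw] using this
  omega

lemma cls_surj {T : Finset V4} (hT : T ⊆ pts) (h7 : T.card = 7)
    (hl : ∀ u ∈ pts, (T.filter (fun v => dt u v = 0)).card ≤ 2) (p : V4) (hp : p ∈ pts) :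
    ∃ t ∈ T, cls t = cls p := by
  have h1 : (T.image cls).card = 7 := by
    rw [Finset.card_image_of_injOn (cls_inj hT h7 hl), h7]
  have h2 : T.image cls = pts.image cls :=
    Finset.eq_of_subset_of_card_le (Finset.image_subset_image hT) (by rw [h1, card_cls])
  have h3 : cls p ∈ T.image cls := h2 ▸ Finset.mem_image_of_mem _ hp
  simpa using h3

/-- Three distinct points of T on a line give a contradiction. -/
lemma no_three {T : Finset V4} (hl : ∀ u ∈ pts, (T.filter (fun v => dt u v = 0)).card ≤ 2)
    (u : V4) (hu : u ∈ pts) (a b c : V4) (ha : a ∈ T) (hb : b ∈ T) (hc : c ∈ T)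
    (hab : a ≠ b) (hac : a ≠ c) (hbc : b ≠ c) (h1 : dt u a = 0) (h2 : dt u b = 0) :
    dt u c ≠ 0 := by
  intro h3
  have h4 : ({a, b, c} : Finset V4) ⊆ T.filter (fun v => dt u v = 0) := by
    intro x hx
    simp only [Finset.mem_insert, Finset.mem_singleton] at hx
    rcases hx with rfl | rfl | rfl <;> simp [*]
  have h5 := Finset.card_le_card h4
  rw [Finset.card_eq_three.2 ⟨a, b, c, hab, hac, hbc, rfl⟩] at h5
  have := hl u hu
  omega

lemma uniq1 : ∀ t ∈ pts, cls t = cls ![1,3,2] → dt ![0,0,1] t ≠ 0 → dt ![1,3,0] t ≠ 0 →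
    t = ![1,3,2] := by decide +kernel

lemma uniq2 : ∀ t ∈ pts, cls t = cls ![1,2,3] → dt ![0,1,0] t ≠ 0 → dt ![1,0,3] t ≠ 0 →
    t = ![1,2,3] := by decide +kernel

lemma uniq3 : ∀ t ∈ pts, cls t = cls ![2,1,3] → dt ![1,0,0] t ≠ 0 → dt ![0,1,3] t ≠ 0 →
    t = ![2,1,3] := by decide +kernel

lemma eq_T0 {T : Finset V4} (hT : T ⊆ pts) (h7 : T.card = 7)
    (hl : ∀ u ∈ pts, (T.filter (fun v => dt u v = 0)).card ≤ 2)
    (h1 : ![1,0,0] ∈ T) (h2 : ![0,1,0] ∈ T) (h3 : ![0,0,1] ∈ T) (h4 : ![1,1,1] ∈ T) :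
    T = T0 := by
  have nt := no_three hl
  have h5 : ![1,3,2] ∈ T := by
    obtain ⟨t, ht, hc⟩ := cls_surj hT h7 hl ![1,3,2] (by decide +kernel)
    have n : ∀ x : V4, cls x ≠ cls ![1,3,2] → x ≠ t := by rintro x hx rfl; exact hx hc
    rw [uniq1 t (hT ht) hc
      (nt _ (by decide +kernel) _ _ t h1 h2 ht (by decide) (n _ (by decide)) (n _ (by decide))
        (by decide) (by decide))
      (nt _ (by decide +kernel) _ _ t h3 h4 ht (by decide) (n _ (by decide)) (n _ (by decide))
        (by decide) (by decide))] at ht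
    exact ht
  have h6 : ![1,2,3] ∈ T := by
    obtain ⟨t, ht, hc⟩ := cls_surj hT h7 hl ![1,2,3] (by decide +kernel)
    have n : ∀ x : V4, cls x ≠ cls ![1,2,3] → x ≠ t := by rintro x hx rfl; exact hx hc
    rw [uniq2 t (hT ht) hc
      (nt _ (by decide +kernel) _ _ t h1 h3 ht (by decide) (n _ (by decide)) (n _ (by decide))
        (by decide) (by decide))
      (nt _ (by decide +kernel) _ _ t h2 h4 ht (by decide) (n _ (by decide)) (n _ (by decide))
        (by decide) (by decide))] at ht
    exact ht
  have h8 : ![2,1,3] ∈ T := by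
    obtain ⟨t, ht, hc⟩ := cls_surj hT h7 hl ![2,1,3] (by decide +kernel)
    have n : ∀ x : V4, cls x ≠ cls ![2,1,3] → x ≠ t := by rintro x hx rfl; exact hx hc
    rw [uniq3 t (hT ht) hc
      (nt _ (by decide +kernel) _ _ t h2 h3 ht (by decide) (n _ (by decide)) (n _ (by decide))
        (by decide) (by decide))
      (nt _ (by decide +kernel) _ _ t h1 h4 ht (by decide) (n _ (by decide)) (n _ (by decide))
        (by decide) (by decide))] at ht
    exact ht
  symm
  apply Finset.eq_of_subset_of_card_le
  · intro x hx
    simp only [T0, Finset.mem_insert, Finset.mem_singleton] at hx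
    rcases hx with rfl | rfl | rfl | rfl | rfl | rfl | rfl <;> assumption
  · rw [h7, T0_card]

lemma mapPt_mul (g h : GL3) (P : Submodule R4 V4) : mapPt (g * h) P = mapPt g (mapPt h P) := by
  unfold mapPt
  rw [← Submodule.map_comp, Units.val_mul, Matrix.mulVecLin_mul]

lemma mapPt_one (P : Submodule R4 V4) : mapPt 1 P = P := by
  unfold mapPt
  rw [Units.val_one, Matrix.mulVecLin_one, Submodule.map_id]

lemma mapPt_inv_self (g : GL3) (P : Submodule R4 V4) : mapPt g⁻¹ (mapPt g P) = P := by
  rw [← mapPt_mul, inv_mul_cancel, mapPt_one]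

lemma mapPt_self_inv (g : GL3) (P : Submodule R4 V4) : mapPt g (mapPt g⁻¹ P) = P := by
  rw [← mapPt_mul, mul_inv_cancel, mapPt_one]

lemma mapPt_inj (g : GL3) : Function.Injective (mapPt g) :=
  Function.LeftInverse.injective (mapPt_inv_self g)

lemma mapPt_mono (g : GL3) {P L : Submodule R4 V4} (h : P ≤ L) : mapPt g P ≤ mapPt g L :=
  Submodule.map_mono h

lemma mapPt_sp (g : GL3) (v : V4) :
    mapPt g (sp v) = sp ((g : Matrix (Fin 3) (Fin 3) R4).mulVec v) := by
  unfold mapPt sp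
  rw [Submodule.map_span, Set.image_singleton]; rfl

lemma mulVec_inj (g : GL3) :
    Function.Injective (Matrix.mulVecLin (g : Matrix (Fin 3) (Fin 3) R4)) := by
  intro x y h
  have h1 := congrArg (fun z => ((g⁻¹ : GL3) : Matrix (Fin 3) (Fin 3) R4).mulVec z) h
  have e : ((g⁻¹ : GL3) : Matrix (Fin 3) (Fin 3) R4) * (g : Matrix (Fin 3) (Fin 3) R4) = 1 := by
    rw [← Units.val_mul, inv_mul_cancel, Units.val_one]
  simpa only [Matrix.mulVecLin_apply, Matrix.mulVec_mulVec, e, Matrix.one_mulVec] using h1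

lemma isLine_map (g : GL3) {L : Submodule R4 V4} (h : IsLine L) : IsLine (mapPt g L) := by
  obtain ⟨e⟩ := h
  exact ⟨e.trans (Submodule.equivMapOfInjective _ (mulVec_inj g) L)⟩

lemma even_sum : ∀ a b c x y z : R4, 2 * x = 0 → 2 * y = 0 → 2 * z = 0 →
    2 * (a * x + b * y + c * z) = 0 := by
  intro a b c x y z h1 h2 h3
  linear_combination a * h1 + b * h2 + c * h3

lemma not_unit_aux : ∀ x : R4, 2 * x ≠ 2 → 2 * x = 0 := by decide +kernel

lemma mulVec3 (A : Matrix (Fin 3) (Fin 3) R4) (v : V4) (i : Fin 3) :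
    A.mulVec v i = A i 0 * v 0 + A i 1 * v 1 + A i 2 * v 2 := by
  simp [Matrix.mulVec, dotProduct, Fin.sum_univ_three]

lemma isUnit_two {x : R4} : IsUnit x ↔ 2 * x = 2 := by
  constructor
  · intro h
    obtain ⟨s, hs⟩ := h.exists_right_inv
    exact unit_aux _ _ hs
  · intro h
    exact IsUnit.of_mul_eq_one _ (unit_aux' x h)

lemma isPoint_map (g : GL3) {P : Submodule R4 V4} (h : IsPoint P) : IsPoint (mapPt g P) := by
  obtain ⟨v, ⟨i, hi⟩, rfl⟩ := h
  refine ⟨_, ?_, mapPt_sp g v⟩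
  by_contra hc
  push Not at hc
  have h0 : ∀ i, 2 * (g : Matrix (Fin 3) (Fin 3) R4).mulVec v i = 0 := fun i =>
    not_unit_aux _ (fun h => hc i (isUnit_two.2 h))
  have h1 : (2 : R4) • v = 0 := by
    apply mulVec_inj g
    rw [map_smul, map_zero]
    ext i
    exact h0 i
  have h2 : 2 * v i = 0 := congrFun h1 i
  rw [isUnit_two, h2] at hi
  exact absurd hi (by decide)

lemma hyp_map (g : GL3) {H : Set (Submodule R4 V4)} (h : IsHyperoval H) :
    IsHyperoval (mapPt g '' H) := by
  refine ⟨?_, ?_, ?_⟩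
  · rintro _ ⟨P, hP, rfl⟩
    exact isPoint_map g (h.1 P hP)
  · rw [Set.ncard_image_of_injective _ (mapPt_inj g), h.2.1]
  · intro L hL
    have h1 := h.2.2 _ (isLine_map g⁻¹ hL)
    have h2 : {P ∈ mapPt g '' H | P ≤ L} = mapPt g '' {P ∈ H | P ≤ mapPt g⁻¹ L} := by
      ext P; constructor
      · rintro ⟨⟨Q, hQ, rfl⟩, hl⟩
        refine ⟨Q, ⟨hQ, ?_⟩, rfl⟩
        have := mapPt_mono g⁻¹ hl
        rwa [mapPt_inv_self] at this
      · rintro ⟨Q, ⟨hQ, hl⟩, rfl⟩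
        refine ⟨⟨Q, hQ, rfl⟩, ?_⟩
        have := mapPt_mono g hl
        rwa [mapPt_self_inv] at this
    rw [h2, Set.ncard_image_of_injective _ (mapPt_inj g)]
    exact h1

/-- The matrix with columns a, b, c. -/
def colM (a b c : V4) : Matrix (Fin 3) (Fin 3) R4 := Matrix.of fun i => ![a i, b i, c i]

lemma colM_det (a b c : V4) : (colM a b c).det = det3 a b c := by
  rw [Matrix.det_fin_three]; rfl

lemma colM_mulVec (a b c v : V4) (i : Fin 3) :
    (colM a b c).mulVec v i = a i * v 0 + b i * v 1 + c i * v 2 := by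
  rw [mulVec3]; rfl

noncomputable def colG (a b c : V4) (h : 2 * det3 a b c = 2) : GL3 :=
  Matrix.GeneralLinearGroup.mk'' (colM a b c) (by rw [colM_det]; exact isUnit_two.2 h)

lemma colG_val (a b c : V4) (h : 2 * det3 a b c = 2) :
    (colG a b c h : Matrix (Fin 3) (Fin 3) R4) = colM a b c := rfl

/-- The standard hyperoval. -/
def H0 : Set (Submodule R4 V4) := sp '' (T0 : Set V4)

lemma pm_cases {x : R4} (h : x ∈ ({1, 3} : Finset R4)) (v : V4) : sp (x • v) = sp v := by
  simp only [Finset.mem_insert, Finset.mem_singleton] at h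
  rcases h with rfl | rfl
  · rw [one_smul]
  · have : (3 : R4) • v = -v := by
      rw [show (3 : R4) = -1 from by decide, neg_smul, one_smul]
    rw [this, sp_neg]

lemma exists_std {H : Set (Submodule R4 V4)} (h : IsHyperoval H) :
    ∃ g : GL3, H = mapPt g '' H0 := by
  have hT : rep H ⊆ pts := fun v hv => (mem_rep.1 hv).1
  have cs := cls_surj hT (rep_card h) (fun u hu => rep_line h hu)
  obtain ⟨a, ha, ca⟩ := cs ![1,0,0] (by decide +kernel)
  obtain ⟨b, hb, cb⟩ := cs ![0,1,0] (by decide +kernel)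
  obtain ⟨c, hc, cc⟩ := cs ![0,0,1] (by decide +kernel)
  obtain ⟨d, hd, cd⟩ := cs ![1,1,1] (by decide +kernel)
  have ma : a ∈ pts.filter (fun v => cls v = ![2,0,0]) :=
    Finset.mem_filter.2 ⟨hT ha, ca.trans (by decide)⟩
  have mb : b ∈ pts.filter (fun v => cls v = ![0,2,0]) :=
    Finset.mem_filter.2 ⟨hT hb, cb.trans (by decide)⟩
  have mc : c ∈ pts.filter (fun v => cls v = ![0,0,2]) :=
    Finset.mem_filter.2 ⟨hT hc, cc.trans (by decide)⟩
  have md : d ∈ pts.filter (fun v => cls v = ![2,2,2]) :=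
    Finset.mem_filter.2 ⟨hT hd, cd.trans (by decide)⟩
  obtain ⟨x, hx, y, hy, z, hz, hs⟩ := frame a ma b mb c mc d md
  have hdet : 2 * det3 (x • a) (y • b) (z • c) = 2 := frame_det a ma b mb c mc x hx y hy z hz
  set g := colG (x • a) (y • b) (z • c) hdet with hg
  have h' := hyp_map g⁻¹ h
  have mem : ∀ v w : V4, v ∈ pts → w ∈ rep H →
      sp ((colM (x • a) (y • b) (z • c)).mulVec v) = sp w → v ∈ rep (mapPt g⁻¹ '' H) := by
    intro v w hv hw e
    refine mem_rep.2 ⟨hv, sp w, (mem_rep.1 hw).2, ?_⟩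
    rw [← e, ← colG_val _ _ _ hdet, ← mapPt_sp, ← hg, mapPt_inv_self]
  have key := eq_T0 (T := rep (mapPt g⁻¹ '' H)) (fun v hv => (mem_rep.1 hv).1) (rep_card h')
    (fun u hu => rep_line h' hu)
    (mem _ a (by decide +kernel) ha (by
      rw [← pm_cases hx a]; congr 1; ext i; rw [colM_mulVec]; simp))
    (mem _ b (by decide +kernel) hb (by
      rw [← pm_cases hy b]; congr 1; ext i; rw [colM_mulVec]; simp))
    (mem _ c (by decide +kernel) hc (by
      rw [← pm_cases hz c]; congr 1; ext i; rw [colM_mulVec]; simp))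
    (mem _ d (by decide +kernel) hd (by
      congr 1; ext i; rw [colM_mulVec, ← hs i]; simp))
  have e : mapPt g⁻¹ '' H = H0 := by rw [H0, ← key, image_rep h'.1]
  refine ⟨g, ?_⟩
  rw [← e, Set.image_image]
  simp only [mapPt_self_inv, Set.image_id']

lemma S0_aux : ∀ t ∈ T0, ∀ r s : R4, (∀ i, s * (r * t i) = t i) →
    ![r * t 0, r * t 1, r * t 2] ∈ S0 := by decide +kernel

lemma sp_mem_H0 (w : V4) : sp w ∈ H0 ↔ w ∈ S0 := by
  constructor
  · rintro ⟨t, ht, e⟩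
    have h1 : w ∈ sp t := e ▸ Submodule.mem_span_singleton_self w
    have h2 : t ∈ sp w := e ▸ Submodule.mem_span_singleton_self t
    obtain ⟨r, rfl⟩ := Submodule.mem_span_singleton.1 h1
    obtain ⟨s, hs⟩ := Submodule.mem_span_singleton.1 h2
    have := S0_aux t ht r s (fun i => congrFun hs i)
    rwa [show ![r * t 0, r * t 1, r * t 2] = r • t from vec_eta (r • t)] at this
  · intro h
    rw [S0, Finset.mem_union, Finset.mem_image] at h
    rcases h with h | ⟨v, hv, rfl⟩
    · exact ⟨w, h, rfl⟩
    · refine ⟨v, hv, ?_⟩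
      rw [show ![-v 0, -v 1, -v 2] = -v from vec_eta (-v), sp_neg]

lemma stab_iff (g : GL3) : mapPt g '' H0 = H0 ↔
    ∀ v ∈ T0, (g : Matrix (Fin 3) (Fin 3) R4).mulVec v ∈ S0 := by
  constructor
  · intro h v hv
    rw [← sp_mem_H0, ← mapPt_sp, ← h]
    exact ⟨_, ⟨v, hv, rfl⟩, rfl⟩
  · intro h
    have fin : H0.Finite := (Finset.finite_toSet T0).image _
    apply Set.eq_of_subset_of_ncard_le _ _ fin
    · rintro _ ⟨_, ⟨v, hv, rfl⟩, rfl⟩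
      rw [mapPt_sp, sp_mem_H0]
      exact h v hv
    · rw [Set.ncard_image_of_injective _ (mapPt_inj g)]

lemma pgl_mk (g : GL3) (H : Set (Submodule R4 V4)) :
    pglMapSet (g : PGL3) H = mapPt g '' H := rfl

lemma pgl_mul (a b : PGL3) (H : Set (Submodule R4 V4)) :
    pglMapSet (a * b) H = pglMapSet a (pglMapSet b H) := by
  induction a using QuotientGroup.induction_on with | H a =>
  induction b using QuotientGroup.induction_on with | H b =>
  rw [← QuotientGroup.mk_mul, pgl_mk, pgl_mk, pgl_mk, Set.image_image]
  simp only [mapPt_mul]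

lemma pgl_one (H : Set (Submodule R4 V4)) : pglMapSet 1 H = H := by
  rw [← QuotientGroup.mk_one, pgl_mk]
  simp only [mapPt_one, Set.image_id']

lemma pgl_eq_iff (g : PGL3) (A B : Set (Submodule R4 V4)) :
    pglMapSet g A = B ↔ A = pglMapSet g⁻¹ B := by
  constructor
  · rintro rfl; rw [← pgl_mul, inv_mul_cancel, pgl_one]
  · rintro rfl; rw [← pgl_mul, mul_inv_cancel, pgl_one]

def conjEquiv (g : PGL3) (H : Set (Submodule R4 V4)) :
    {k : PGL3 // pglMapSet k (pglMapSet g H) = pglMapSet g H} ≃ {k : PGL3 // pglMapSet k H = H} :=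
  ((MulAut.conj g⁻¹).toEquiv).subtypeEquiv (by
    intro k
    have e : (MulAut.conj g⁻¹).toEquiv k = g⁻¹ * (k * g) := by simp [mul_assoc]
    rw [e, pgl_mul, pgl_mul]
    conv_rhs => rw [eq_comm, ← pgl_eq_iff, eq_comm])

lemma T0_neg : ∀ v ∈ T0, ![-v 0, -v 1, -v 2] ∉ T0 := by decide +kernel

lemma S0_neg : ∀ v ∈ S0, ![-v 0, -v 1, -v 2] ∈ S0 := by decide +kernel

lemma S0_neg' {v : V4} (h : v ∈ S0) : -v ∈ S0 := by
  have := S0_neg v h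
  rwa [show ![-v 0, -v 1, -v 2] = -v from vec_eta (-v)] at this

lemma mem_F (a b c : V4) : (a, b, c) ∈ F ↔ a ∈ T0 ∧ b ∈ S0 ∧ c ∈ S0 ∧ 2 * det3 a b c = 2 ∧
    ∀ v ∈ T0, (colM a b c).mulVec v ∈ S0 := by
  rw [F, Finset.mem_filter, Finset.mem_product, Finset.mem_product]
  have : ∀ v, (![a 0 * v 0 + b 0 * v 1 + c 0 * v 2, a 1 * v 0 + b 1 * v 1 + c 1 * v 2,
      a 2 * v 0 + b 2 * v 1 + c 2 * v 2] : V4) = (colM a b c).mulVec v := by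
    intro v
    rw [← vec_eta ((colM a b c).mulVec v)]
    simp only [colM_mulVec]
  have h1 := this ![1, 1, 1]
  simp only [Matrix.cons_val, mul_one] at h1
  simp only [inS_iff, this, and_assoc, h1]
  constructor
  · rintro ⟨p1, p2, p3, -, p4, p5⟩
    exact ⟨p1, p2, p3, p4, p5⟩
  · rintro ⟨p1, p2, p3, p4, p5⟩
    exact ⟨p1, p2, p3, p5 _ (by decide), p4, p5⟩

lemma colM_eta (A : Matrix (Fin 3) (Fin 3) R4) :
    colM (fun i => A i 0) (fun i => A i 1) (fun i => A i 2) = A := by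
  ext i j; fin_cases j <;> rfl

lemma mk_eq_iff (a b : GL3) : (a : PGL3) = b ↔ b = a ∨ b = -a := by
  rw [QuotientGroup.eq]
  change a⁻¹ * b = 1 ∨ a⁻¹ * b = -1 ↔ _
  rw [inv_mul_eq_iff_eq_mul, inv_mul_eq_iff_eq_mul, mul_one, mul_neg, mul_one]

lemma stab_rep (g : GL3) (h : mapPt g '' H0 = H0)
    (h0 : (fun i => (g : Matrix (Fin 3) (Fin 3) R4) i 0) ∈ T0) :
    ((fun i => (g : Matrix (Fin 3) (Fin 3) R4) i 0), (fun i => (g : Matrix (Fin 3) (Fin 3) R4) i 1),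
      (fun i => (g : Matrix (Fin 3) (Fin 3) R4) i 2)) ∈ F := by
  rw [stab_iff] at h
  rw [mem_F, ← colM_det, colM_eta]
  refine ⟨h0, ?_, ?_, ?_, h⟩
  · convert h ![0,1,0] (by decide) using 1
    ext i; rw [mulVec3]; simp
  · convert h ![0,0,1] (by decide) using 1
    ext i; rw [mulVec3]; simp
  · rw [← isUnit_two, ← Matrix.isUnit_iff_isUnit_det]
    exact g.isUnit

noncomputable def toStab (p : F) : {g : PGL3 // pglMapSet g H0 = H0} :=
  ⟨(colG p.1.1 p.1.2.1 p.1.2.2 ((mem_F _ _ _).1 p.2).2.2.2.1 : GL3), by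
    rw [pgl_mk, stab_iff]
    exact ((mem_F _ _ _).1 p.2).2.2.2.2⟩

lemma toStab_inj : Function.Injective toStab := by
  rintro ⟨⟨a, b, c⟩, hp⟩ ⟨⟨a₂, b₂, c₂⟩, hq⟩ h
  have h1 := congrArg Subtype.val h
  simp only [toStab] at h1
  rw [mk_eq_iff] at h1
  rcases h1 with h1 | h1
  · have h2 : colM a₂ b₂ c₂ = colM a b c := congrArg Units.val h1
    have e : ∀ i j, colM a₂ b₂ c₂ i j = colM a b c i j := fun i j => by rw [h2]
    have ea : a = a₂ := funext fun i => (e i 0).symm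
    have eb : b = b₂ := funext fun i => (e i 1).symm
    have ec : c = c₂ := funext fun i => (e i 2).symm
    subst ea eb ec
    rfl
  · exfalso
    have h2 : colM a₂ b₂ c₂ = -colM a b c := congrArg Units.val h1
    have ea : a₂ = -a := funext fun i => by
      have : colM a₂ b₂ c₂ i 0 = (-colM a b c) i 0 := by rw [h2]
      exact this
    have h3 := ((mem_F _ _ _).1 hp).1
    have h4 := ((mem_F _ _ _).1 hq).1
    apply T0_neg a h3
    rwa [show ![-a 0, -a 1, -a 2] = -a from vec_eta (-a), ← ea]

lemma toStab_of (g : GL3) (h : mapPt g '' H0 = H0)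
    (h0 : (fun i => (g : Matrix (Fin 3) (Fin 3) R4) i 0) ∈ T0) :
    ∃ p, (toStab p).1 = (g : PGL3) := by
  refine ⟨⟨_, stab_rep g h h0⟩, ?_⟩
  simp only [toStab]
  congr 1
  apply Units.ext
  exact colM_eta _

lemma toStab_surj : Function.Surjective toStab := by
  rintro ⟨g, hg⟩
  induction g using QuotientGroup.induction_on with | H g =>
  rw [pgl_mk] at hg
  have hc : (fun i => (g : Matrix (Fin 3) (Fin 3) R4) i 0) ∈ S0 := by
    convert (stab_iff g).1 hg ![1,0,0] (by decide) using 1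
    ext i; rw [mulVec3]; simp
  rw [S0, Finset.mem_union, Finset.mem_image] at hc
  rcases hc with hc | ⟨v, hv, e⟩
  · obtain ⟨p, hp⟩ := toStab_of g hg hc
    exact ⟨p, Subtype.ext hp⟩
  · have e' : (fun i => ((-g : GL3) : Matrix (Fin 3) (Fin 3) R4) i 0) = v := by
      funext i
      have h1 : -v i = (g : Matrix (Fin 3) (Fin 3) R4) i 0 := by
        rw [show ![-v 0, -v 1, -v 2] = -v from vec_eta (-v)] at e
        exact congrFun e i
      rw [Units.val_neg, Matrix.neg_apply, ← h1, neg_neg]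
    have hg' : mapPt (-g) '' H0 = H0 := by
      rw [show mapPt (-g) = mapPt g from funext (mapPt_neg g), hg]
    obtain ⟨p, hp⟩ := toStab_of (-g) hg' (by rw [e']; exact hv)
    refine ⟨p, Subtype.ext (hp.trans ?_)⟩
    rw [mk_eq_iff]
    right; rw [neg_neg]

lemma stab_H0 : Nat.card {g : PGL3 // pglMapSet g H0 = H0} = 168 := by
  rw [← Nat.card_eq_of_bijective toStab ⟨toStab_inj, toStab_surj⟩, Nat.card_eq_fintype_card,
    Fintype.card_coe, F_card]

end HypOval

/-- The setwise stabilizer in PGL(3, ℤ/4ℤ) of any hyperoval of PHG(2, ℤ/4ℤ)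
has order 168. -/
theorem hyperoval_stabilizer_card :
    ∀ H : Set (Submodule R4 (Fin 3 → R4)), IsHyperoval H →
      Nat.card {g : PGL3 // pglMapSet g H = H} = 168 := by
  intro H hH
  obtain ⟨g, hg⟩ := HypOval.exists_std hH
  rw [← HypOval.pgl_mk] at hg
  rw [hg, Nat.card_congr (HypOval.conjEquiv g HypOval.H0), HypOval.stab_H0]
end

section
/- Let H be the subgroup of PGL(3, ℤ/4ℤ) consisting of the classes of all matrices congruent to the identity matrix modulo 2 (i.e. H = (I + 2·M₃(ℤ/4ℤ)) / {±I}). Then H is a normal subgroup of PGL(3, ℤ/4ℤ) of order 256, and H acts simply transitively (regularly) on the set of hyperovals of PHG(2, ℤ/4ℤ). -/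
/-- Reduction mod 2 on ℤ/4ℤ. -/
def red2 : ZMod 4 →+* ZMod 2 := ZMod.castHom (show (2:ℕ) ∣ 4 by norm_num) (ZMod 2)

/-- Reduction mod 2 on GL(3, ℤ/4ℤ). -/
def redGL : GL3 →* GL (Fin 3) (ZMod 2) :=
  Units.map (RingHom.mapMatrix red2 :
    Matrix (Fin 3) (Fin 3) R4 →+* Matrix (Fin 3) (Fin 3) (ZMod 2)).toMonoidHom

/-- The subgroup H = (I + 2·M₃(ℤ/4ℤ))/{±I} of PGL(3, ℤ/4ℤ): the classes of all
matrices congruent to the identity matrix modulo 2. -/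
def Hsub : Subgroup PGL3 := (MonoidHom.ker redGL).map (QuotientGroup.mk' pmOne)

/-! ### Coordinates for points -/

/-- Normalised representatives of the 28 points, grouped by neighbour class. -/
def rep : Fin 28 → Fin 3 → ZMod 4 :=
  ![![1, 0, 0], ![1, 2, 0], ![1, 0, 2], ![1, 2, 2],
    ![0, 1, 0], ![2, 1, 0], ![0, 1, 2], ![2, 1, 2],
    ![0, 0, 1], ![2, 0, 1], ![0, 2, 1], ![2, 2, 1],
    ![1, 1, 1], ![1, 3, 1], ![1, 1, 3], ![1, 3, 3],
    ![1, 1, 0], ![1, 3, 0], ![1, 1, 2], ![1, 3, 2],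
    ![1, 0, 1], ![1, 2, 1], ![1, 0, 3], ![1, 2, 3],
    ![0, 1, 1], ![2, 1, 1], ![0, 1, 3], ![2, 1, 3]]

/-- The point with class `k` and number `s` within its class. -/
def idx (k : Fin 7) (s : Fin 4) : Fin 28 := ⟨4 * k.1 + s.1, by omega⟩

/-- Bit mask of the lines through the point number `i`. -/
def inc (i : ℕ) : ℕ :=
  (19086659772062044168281330658975573758165054401907669857782032211324936996907563139339817429297918263686098302334959320727075053690908206503873341817168630731268420796658425758764848071332284840177793316083775617455357091639538692916560 >>> (28 * i)) % 2 ^ 28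

lemma inc_testBit : ∀ i l : Fin 28, (inc i).testBit l = true → rep l ⬝ᵥ rep i = 0 := by
  decide +kernel

lemma inc_inj : ∀ i j : Fin 28, inc i = inc j → i = j := by
  decide +kernel

lemma exists_rep : ∀ v : Fin 3 → ZMod 4, (∃ i, 2 * v i ≠ 0) → ∃ k s, v = rep (idx k s) ∨
    v = -rep (idx k s) := by
  decide +kernel

lemma rep_unit : ∀ i, ∃ j, rep i j * rep i j = 1 := by
  decide +kernel

lemma rep_inj : ∀ i j : Fin 28, ∀ c : ZMod 4, rep i = c • rep j → i = j := by
  decide +kernel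

lemma rep_class : ∀ k s k' s', ∀ c : ZMod 4,
    (2 : ZMod 4) • rep (idx k s) = (2 : ZMod 4) • c • rep (idx k' s') → k = k' := by
  decide +kernel

lemma rep_scalar : ∀ i, ∀ c : ZMod 4,
    (2 : ZMod 4) • rep i = (2 : ZMod 4) • c • rep i → c = 1 ∨ c = -1 := by
  decide +kernel

lemma rep_base : ∀ (k : Fin 4) s, ∃ u : Fin 3 → ZMod 4,
    rep (idx (Fin.castLE (by norm_num) k) s) =
      rep (idx (Fin.castLE (by norm_num) k) 0) + (2 : ZMod 4) • u := by
  decide +kernel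

lemma det4 : ∀ a b c d p q : Fin 4,
    inc (idx 0 a) &&& inc (idx 1 b) &&& inc (idx 4 p) = 0 →
    inc (idx 0 a) &&& inc (idx 1 b) &&& inc (idx 4 q) = 0 →
    inc (idx 2 c) &&& inc (idx 3 d) &&& inc (idx 4 p) = 0 →
    inc (idx 2 c) &&& inc (idx 3 d) &&& inc (idx 4 q) = 0 → p = q := by
  decide +kernel

lemma det5 : ∀ a b c d p q : Fin 4,
    inc (idx 0 a) &&& inc (idx 2 b) &&& inc (idx 5 p) = 0 →
    inc (idx 0 a) &&& inc (idx 2 b) &&& inc (idx 5 q) = 0 →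
    inc (idx 1 c) &&& inc (idx 3 d) &&& inc (idx 5 p) = 0 →
    inc (idx 1 c) &&& inc (idx 3 d) &&& inc (idx 5 q) = 0 → p = q := by
  decide +kernel

lemma det6 : ∀ a b c d p q : Fin 4,
    inc (idx 1 a) &&& inc (idx 2 b) &&& inc (idx 6 p) = 0 →
    inc (idx 1 a) &&& inc (idx 2 b) &&& inc (idx 6 q) = 0 →
    inc (idx 0 c) &&& inc (idx 3 d) &&& inc (idx 6 p) = 0 →
    inc (idx 0 c) &&& inc (idx 3 d) &&& inc (idx 6 q) = 0 → p = q := by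
  decide +kernel

/-! ### Exhaustive search: a hyperoval has no two neighbouring points -/

/-- Search for `need` further masks from `rest` so that no bit is hit three times; `once`, `twice`
are the bits hit once, twice so far.  Returns `true` if there is no solution. -/
def search : ℕ → List ℕ → ℕ → ℕ → ℕ → Bool
  | 0, _, _, _, _ => false
  | _ + 1, _, _, _, 0 => false
  | n + 1, rest, once, twice, need + 1 =>
    match rest.filter (fun m => Nat.beq (m &&& twice) 0) with
    | [] => true
    | p :: t =>
      if Nat.ble (need + 1) (t.length + 1) then
        search n t (once ||| p) (twice ||| (once &&& p)) need && search n t once twice (need + 1)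
      else true

/-- No bit is common to three distinct members. -/
def Arc (S : Finset ℕ) : Prop :=
  ∀ a ∈ S, ∀ b ∈ S, ∀ c ∈ S, a ≠ b → a ≠ c → b ≠ c → a &&& b &&& c = 0

lemma search_sound : ∀ (n : ℕ) (rest : List ℕ) (once twice need : ℕ) (T U : Finset ℕ),
    search n rest once twice need = true → Arc (T ∪ U) → Disjoint T U → U.card = need →
    (∀ u ∈ U, u ∈ rest) →
    (∀ l, once.testBit l = true → ∃ a ∈ T, a.testBit l = true) →
    (∀ l, twice.testBit l = true → ∃ a ∈ T, ∃ b ∈ T, a ≠ b ∧ a.testBit l = true ∧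
      b.testBit l = true) → False := by
  intro n
  induction n with
  | zero => intro rest once twice need T U h; simp [search] at h
  | succ n ih =>
    intro rest once twice need T U h hA hD hc hr h1 h2
    cases need with
    | zero => simp [search] at h
    | succ need =>
      have hf : ∀ u ∈ U, u ∈ rest.filter (fun m => Nat.beq (m &&& twice) 0) := by
        intro u hu
        rw [List.mem_filter]
        refine ⟨hr u hu, ?_⟩
        rw [Nat.beq_eq]
        by_contra hne
        obtain ⟨l, hl⟩ := Nat.exists_testBit_of_ne_zero hne
        rw [Nat.testBit_and, Bool.and_eq_true] at hl
        obtain ⟨a, ha, b, hb, hab, hal, hbl⟩ := h2 l hl.2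
        have hau : a ≠ u := fun e => Finset.disjoint_left.1 hD ha (e ▸ hu)
        have hbu : b ≠ u := fun e => Finset.disjoint_left.1 hD hb (e ▸ hu)
        have := hA a (Finset.mem_union_left _ ha) b (Finset.mem_union_left _ hb) u
          (Finset.mem_union_right _ hu) hab hau hbu
        have h3 := congrArg (fun x => Nat.testBit x l) this
        simp [hal, hbl, hl.1] at h3
      rw [search] at h
      generalize rest.filter (fun m => Nat.beq (m &&& twice) 0) = R at h hf
      have hlen : U.card ≤ R.length :=
        (Finset.card_le_card (t := R.toFinset) (fun u hu => List.mem_toFinset.2 (hf u hu))).trans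
          R.toFinset_card_le
      cases R with
      | nil => rw [hc] at hlen; simp at hlen
      | cons p t =>
        simp only [List.length_cons] at hlen
        have hb : Nat.ble (need + 1) (t.length + 1) = true := by
          rw [Nat.ble_eq]; omega
        simp only [hb, if_true, Bool.and_eq_true] at h
        by_cases hp : p ∈ U
        · have hpT : p ∉ T := fun e => Finset.disjoint_left.1 hD e hp
          refine ih t _ _ _ (insert p T) (U.erase p) h.1 ?_ ?_ ?_ ?_ ?_ ?_
          · have : insert p T ∪ U.erase p = T ∪ U := by
              ext x
              simp only [Finset.mem_union, Finset.mem_insert, Finset.mem_erase]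
              by_cases hx : x = p
              · subst hx; simp [hp]
              · simp [hx]
            rw [this]; exact hA
          · rw [Finset.disjoint_left]
            intro x hx hx'
            rw [Finset.mem_erase] at hx'
            rcases Finset.mem_insert.1 hx with e | e
            · exact hx'.1 e
            · exact Finset.disjoint_left.1 hD e hx'.2
          · rw [Finset.card_erase_of_mem hp, hc]; rfl
          · intro u hu
            rw [Finset.mem_erase] at hu
            rcases List.mem_cons.1 (hf u hu.2) with e | e
            · exact absurd e hu.1
            · exact e
          · intro l hl
            rw [Nat.testBit_or, Bool.or_eq_true] at hl
            rcases hl with e | e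
            · obtain ⟨a, ha, hal⟩ := h1 l e
              exact ⟨a, Finset.mem_insert_of_mem ha, hal⟩
            · exact ⟨p, Finset.mem_insert_self _ _, e⟩
          · intro l hl
            rw [Nat.testBit_or, Bool.or_eq_true, Nat.testBit_and, Bool.and_eq_true] at hl
            rcases hl with e | e
            · obtain ⟨a, ha, b, hb, hh⟩ := h2 l e
              exact ⟨a, Finset.mem_insert_of_mem ha, b, Finset.mem_insert_of_mem hb, hh⟩
            · obtain ⟨a, ha, hal⟩ := h1 l e.1
              exact ⟨a, Finset.mem_insert_of_mem ha, p, Finset.mem_insert_self _ _,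
                fun e' => hpT (e' ▸ ha), hal, e.2⟩
        · refine ih t _ _ _ T U h.2 hA hD hc ?_ h1 h2
          intro u hu
          rcases List.mem_cons.1 (hf u hu) with e | e
          · exact absurd (e ▸ hu) hp
          · exact e

lemma search_pairs : ∀ k : Fin 7, ∀ s s' : Fin 4, s.1 < s'.1 →
    search 28 ((List.range 28).map inc) (inc (idx k s) ||| inc (idx k s'))
      (inc (idx k s) &&& inc (idx k s')) 5 = true := by
  decide +kernel

lemma no_neighbours (S : Finset (Fin 28)) (hS : S.card = 7)
    (hA : ∀ i ∈ S, ∀ j ∈ S, ∀ k ∈ S, i ≠ j → i ≠ k → j ≠ k → inc i &&& inc j &&& inc k = 0)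
    (k : Fin 7) (s s' : Fin 4) (h : idx k s ∈ S) (h' : idx k s' ∈ S) : s = s' := by
  have key : ∀ s s' : Fin 4, idx k s ∈ S → idx k s' ∈ S → s.1 < s'.1 → False := by
    intro s s' h h' hlt
    have hne : idx k s ≠ idx k s' := by
      intro e
      have := congrArg Fin.val e
      simp only [idx] at this
      omega
    have hne' : inc (idx k s) ≠ inc (idx k s') := fun e => hne (inc_inj _ _ e)
    have hinj : Function.Injective (fun i : Fin 28 => inc i) := fun i j e => inc_inj i j e
    have hsub : ({inc (idx k s), inc (idx k s')} : Finset ℕ) ⊆ S.image (fun i : Fin 28 => inc i) := by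
      intro x hx
      simp only [Finset.mem_insert, Finset.mem_singleton] at hx
      rcases hx with rfl | rfl
      · exact Finset.mem_image_of_mem (fun i : Fin 28 => inc i) h
      · exact Finset.mem_image_of_mem (fun i : Fin 28 => inc i) h'
    refine search_sound 28 _ _ _ 5 {inc (idx k s), inc (idx k s')}
      (S.image (fun i : Fin 28 => inc i) \ {inc (idx k s), inc (idx k s')})
      (search_pairs k s s' hlt) ?_ Finset.disjoint_sdiff ?_ ?_ ?_ ?_
    · rw [Finset.union_sdiff_of_subset hsub]
      intro a ha b hb c hc hab hac hbc
      obtain ⟨i, hi, rfl⟩ := Finset.mem_image.1 ha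
      obtain ⟨j, hj, rfl⟩ := Finset.mem_image.1 hb
      obtain ⟨m, hm, rfl⟩ := Finset.mem_image.1 hc
      exact hA i hi j hj m hm (fun e => hab (by rw [e])) (fun e => hac (by rw [e]))
        (fun e => hbc (by rw [e]))
    · rw [Finset.card_sdiff_of_subset hsub, Finset.card_image_of_injective _ hinj, hS,
        Finset.card_pair hne']
    · intro u hu
      obtain ⟨i, -, rfl⟩ := Finset.mem_image.1 (Finset.mem_sdiff.1 hu).1
      exact List.mem_map.2 ⟨i.1, List.mem_range.2 i.2, rfl⟩
    · intro l hl
      rw [Nat.testBit_or, Bool.or_eq_true] at hl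
      rcases hl with e | e
      · exact ⟨_, by simp, e⟩
      · exact ⟨_, Finset.mem_insert_of_mem (Finset.mem_singleton_self _), e⟩
    · intro l hl
      rw [Nat.testBit_and, Bool.and_eq_true] at hl
      exact ⟨_, Finset.mem_insert_self _ _, _,
        Finset.mem_insert_of_mem (Finset.mem_singleton_self _), hne', hl.1, hl.2⟩
  rcases lt_trichotomy s.1 s'.1 with e | e | e
  · exact (key s s' h h' e).elim
  · exact Fin.ext e
  · have hfalse : False := key s' s h' h e
    exact False.elim hfalse

/-! ### Lines -/

/-- The line with equation `a ⬝ᵥ v = 0`. -/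
def lineOf (a : Fin 3 → R4) : Submodule R4 (Fin 3 → R4) where
  carrier := {v | a ⬝ᵥ v = 0}
  add_mem' := by
    intro v w hv hw
    simp only [Set.mem_ofPred_eq] at *
    rw [dotProduct_add, hv, hw, add_zero]
  zero_mem' := by simp
  smul_mem' := by
    intro c v hv
    simp only [Set.mem_ofPred_eq] at *
    rw [dotProduct_smul, hv, smul_zero]

lemma mem_lineOf (a v : Fin 3 → R4) : v ∈ lineOf a ↔ a ⬝ᵥ v = 0 := Iff.rfl

lemma isLine_lineOf (a : Fin 3 → R4) (i : Fin 3) (hi : a i * a i = 1) : IsLine (lineOf a) := by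
  let f : lineOf a →ₗ[R4] (Fin 2 → R4) :=
    { toFun := fun v j => v.1 (i.succAbove j)
      map_add' := fun v w => rfl
      map_smul' := fun c v => rfl }
  have hd : ∀ v : Fin 3 → R4, a ⬝ᵥ v = a i * v i + ∑ j : Fin 2, a (i.succAbove j) * v (i.succAbove j) :=
    fun v => Fin.sum_univ_succAbove (fun j => a j * v j) i
  refine ⟨(LinearEquiv.ofBijective f ⟨?_, ?_⟩).symm⟩
  · rw [injective_iff_map_eq_zero]
    rintro ⟨v, hv⟩ h
    have h0 : ∀ j, v (i.succAbove j) = 0 := fun j => congrFun h j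
    have hv' := (mem_lineOf a v).1 hv
    rw [hd] at hv'
    simp only [h0, mul_zero, Finset.sum_const_zero, add_zero] at hv'
    have hvi : v i = 0 := by
      calc v i = a i * (a i * v i) := by rw [← mul_assoc, hi, one_mul]
        _ = 0 := by rw [hv', mul_zero]
    apply Subtype.ext
    funext m
    rcases Fin.eq_self_or_eq_succAbove i m with e | ⟨j, e⟩
    · rw [e]; exact hvi
    · rw [e]; exact h0 j
  · intro w
    refine ⟨⟨i.insertNth (-(a i * ∑ j : Fin 2, a (i.succAbove j) * w j)) w, ?_⟩, ?_⟩
    · rw [mem_lineOf, hd]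
      simp only [Fin.insertNth_apply_same, Fin.insertNth_apply_succAbove]
      rw [mul_neg, ← mul_assoc, hi, one_mul, neg_add_cancel]
    · funext j
      exact Fin.insertNth_apply_succAbove (α := fun _ => R4) i _ w j

/-! ### Hyperovals in coordinates -/

/-- The point number `i`. -/
def pnt (i : Fin 28) : Submodule R4 (Fin 3 → R4) := Submodule.span R4 {rep i}

lemma pnt_inj {i j : Fin 28} (h : pnt i = pnt j) : i = j := by
  have : rep i ∈ pnt j := h ▸ Submodule.mem_span_singleton_self _
  obtain ⟨c, hc⟩ := Submodule.mem_span_singleton.1 this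
  exact rep_inj i j c hc.symm

lemma isUnit_iff4 : ∀ x : ZMod 4, IsUnit x ↔ 2 * x ≠ 0 := by decide +kernel

lemma isPoint_exists {P : Submodule R4 (Fin 3 → R4)} (h : IsPoint P) : ∃ k s, P = pnt (idx k s) := by
  obtain ⟨v, ⟨i, hi⟩, rfl⟩ := h
  obtain ⟨k, s, e⟩ := exists_rep v ⟨i, (isUnit_iff4 _).1 hi⟩
  refine ⟨k, s, ?_⟩
  rcases e with e | e
  · rw [e, pnt]
  · rw [e, pnt, ← Set.neg_singleton, Submodule.span_neg]

lemma hyp_arc {H : Set (Submodule R4 (Fin 3 → R4))} (hH : IsHyperoval H) (i j k : Fin 28)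
    (hi : pnt i ∈ H) (hj : pnt j ∈ H) (hk : pnt k ∈ H) (hij : i ≠ j) (hik : i ≠ k) (hjk : j ≠ k) :
    inc i &&& inc j &&& inc k = 0 := by
  by_contra hne
  obtain ⟨l, hl⟩ := Nat.exists_testBit_of_ne_zero hne
  simp only [Nat.testBit_and, Bool.and_eq_true] at hl
  obtain ⟨⟨h1, h2⟩, h3⟩ := hl
  have hlt : l < 28 := by
    by_contra hge
    have : inc i < 2 ^ l :=
      (Nat.mod_lt _ (by positivity)).trans_le (Nat.pow_le_pow_right (by norm_num) (not_lt.1 hge))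
    rw [Nat.testBit_lt_two_pow this] at h1
    exact Bool.false_ne_true h1
  have mem : ∀ m : Fin 28, (inc m).testBit l = true → pnt m ≤ lineOf (rep ⟨l, hlt⟩) := by
    intro m hm
    rw [pnt, Submodule.span_singleton_le_iff_mem, mem_lineOf]
    exact inc_testBit m ⟨l, hlt⟩ hm
  obtain ⟨c, hc⟩ := rep_unit ⟨l, hlt⟩
  have hle := hH.2.2 _ (isLine_lineOf _ c hc)
  have hfin : H.Finite := Set.finite_of_ncard_ne_zero (by rw [hH.2.1]; norm_num)
  have hsub : ({pnt i, pnt j, pnt k} : Set (Submodule R4 (Fin 3 → R4))) ⊆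
      {P ∈ H | P ≤ lineOf (rep ⟨l, hlt⟩)} := by
    rintro P (rfl | rfl | rfl)
    · exact ⟨hi, mem i h1⟩
    · exact ⟨hj, mem j h2⟩
    · exact ⟨hk, mem k h3⟩
  have h3' : ({pnt i, pnt j, pnt k} : Set (Submodule R4 (Fin 3 → R4))).ncard = 3 :=
    Set.ncard_eq_three.2 ⟨_, _, _, fun e => hij (pnt_inj e), fun e => hik (pnt_inj e),
      fun e => hjk (pnt_inj e), rfl⟩
  have := Set.ncard_le_ncard hsub (hfin.subset (fun P hP => hP.1))
  omega

lemma idx_inj {k k' : Fin 7} {s s' : Fin 4} (h : idx k s = idx k' s') : k = k' ∧ s = s' := by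
  have := congrArg Fin.val h
  simp only [idx] at this
  constructor <;> apply Fin.ext <;> omega

open Classical in
lemma hyp_unique {H : Set (Submodule R4 (Fin 3 → R4))} (hH : IsHyperoval H) :
    (∀ k s s', pnt (idx k s) ∈ H → pnt (idx k s') ∈ H → s = s') ∧
    ∀ k, ∃ s, pnt (idx k s) ∈ H := by
  let S : Finset (Fin 28) := Finset.univ.filter (fun i => pnt i ∈ H)
  have hmem : ∀ i, i ∈ S ↔ pnt i ∈ H := fun i => by simp [S]
  have himg : pnt '' (S : Set (Fin 28)) = H := by
    ext P
    constructor
    · rintro ⟨i, hi, rfl⟩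
      exact (hmem i).1 hi
    · intro hP
      obtain ⟨k, s, rfl⟩ := isPoint_exists (hH.1 P hP)
      exact ⟨_, (hmem _).2 hP, rfl⟩
  have hcard : S.card = 7 := by
    rw [← Set.ncard_coe_finset, ← Set.ncard_image_of_injective _ (fun i j e => pnt_inj e), himg,
      hH.2.1]
  have hu : ∀ k s s', pnt (idx k s) ∈ H → pnt (idx k s') ∈ H → s = s' := fun k s s' h h' =>
    no_neighbours S hcard (fun i hi j hj k hk => hyp_arc hH i j k ((hmem i).1 hi) ((hmem j).1 hj)
      ((hmem k).1 hk)) k s s' ((hmem _).2 h) ((hmem _).2 h')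
  refine ⟨hu, ?_⟩
  have hpoint : ∀ i : Fin 28, ∃ k s, i = idx k s := by decide +kernel
  choose cl nb hcl using hpoint
  have hinj : Set.InjOn cl S := by
    intro i hi j hj e
    have hi' := (hmem i).1 hi
    have hj' := (hmem j).1 hj
    rw [hcl i] at hi'
    rw [hcl j] at hj'
    rw [hcl i, hcl j, e]
    rw [e] at hi'
    rw [hu _ _ _ hi' hj']
  have huniv : S.image cl = Finset.univ := by
    apply Finset.eq_univ_of_card
    rw [Finset.card_image_of_injOn hinj, hcard]; rfl
  intro k
  have : k ∈ S.image cl := by rw [huniv]; exact Finset.mem_univ k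
  obtain ⟨i, hi, rfl⟩ := Finset.mem_image.1 this
  refine ⟨nb i, ?_⟩
  rw [← hcl i]
  exact (hmem i).1 hi

/-- The number, within class `k`, of a point of `H` in that class. -/
noncomputable def fr (H : Set (Submodule R4 (Fin 3 → R4))) (k : Fin 7) : Fin 4 :=
  Classical.epsilon (fun s => pnt (idx k s) ∈ H)

lemma fr_mem {H : Set (Submodule R4 (Fin 3 → R4))} (hH : IsHyperoval H) (k : Fin 7) :
    pnt (idx k (fr H k)) ∈ H :=
  Classical.epsilon_spec ((hyp_unique hH).2 k)

lemma hyp_mem_iff {H : Set (Submodule R4 (Fin 3 → R4))} (hH : IsHyperoval H)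
    (P : Submodule R4 (Fin 3 → R4)) : P ∈ H ↔ ∃ k, P = pnt (idx k (fr H k)) := by
  constructor
  · intro hP
    obtain ⟨k, s, rfl⟩ := isPoint_exists (hH.1 P hP)
    exact ⟨k, by rw [(hyp_unique hH).1 k _ _ hP (fr_mem hH k)]⟩
  · rintro ⟨k, rfl⟩
    exact fr_mem hH k

lemma hyp_noncol {H : Set (Submodule R4 (Fin 3 → R4))} (hH : IsHyperoval H) (k l m : Fin 7)
    (h1 : k ≠ l) (h2 : k ≠ m) (h3 : l ≠ m) :
    inc (idx k (fr H k)) &&& inc (idx l (fr H l)) &&& inc (idx m (fr H m)) = 0 :=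
  hyp_arc hH _ _ _ (fr_mem hH k) (fr_mem hH l) (fr_mem hH m)
    (fun e => h1 (idx_inj e).1) (fun e => h2 (idx_inj e).1) (fun e => h3 (idx_inj e).1)

/-- A hyperoval is determined by its points in the four classes of a frame. -/
lemma hyp_frame {H H' : Set (Submodule R4 (Fin 3 → R4))} (hH : IsHyperoval H)
    (hH' : IsHyperoval H') (h : ∀ k : Fin 4, fr H (Fin.castLE (by norm_num) k) =
      fr H' (Fin.castLE (by norm_num) k)) : H = H' := by
  have e0 : fr H 0 = fr H' 0 := h 0
  have e1 : fr H 1 = fr H' 1 := h 1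
  have e2 : fr H 2 = fr H' 2 := h 2
  have e3 : fr H 3 = fr H' 3 := h 3
  have nc := hyp_noncol hH
  have nc' := hyp_noncol hH'
  have e4 : fr H 4 = fr H' 4 := by
    refine det4 (fr H 0) (fr H 1) (fr H 2) (fr H 3) _ _ ?_ ?_ ?_ ?_
    · exact nc 0 1 4 (by decide) (by decide) (by decide)
    · rw [e0, e1]; exact nc' 0 1 4 (by decide) (by decide) (by decide)
    · exact nc 2 3 4 (by decide) (by decide) (by decide)
    · rw [e2, e3]; exact nc' 2 3 4 (by decide) (by decide) (by decide)
  have e5 : fr H 5 = fr H' 5 := by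
    refine det5 (fr H 0) (fr H 2) (fr H 1) (fr H 3) _ _ ?_ ?_ ?_ ?_
    · exact nc 0 2 5 (by decide) (by decide) (by decide)
    · rw [e0, e2]; exact nc' 0 2 5 (by decide) (by decide) (by decide)
    · exact nc 1 3 5 (by decide) (by decide) (by decide)
    · rw [e1, e3]; exact nc' 1 3 5 (by decide) (by decide) (by decide)
  have e6 : fr H 6 = fr H' 6 := by
    refine det6 (fr H 1) (fr H 2) (fr H 0) (fr H 3) _ _ ?_ ?_ ?_ ?_
    · exact nc 1 2 6 (by decide) (by decide) (by decide)
    · rw [e1, e2]; exact nc' 1 2 6 (by decide) (by decide) (by decide)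
    · exact nc 0 3 6 (by decide) (by decide) (by decide)
    · rw [e0, e3]; exact nc' 0 3 6 (by decide) (by decide) (by decide)
  have hall : ∀ k, fr H k = fr H' k := by
    intro k
    fin_cases k
    exacts [e0, e1, e2, e3, e4, e5, e6]
  ext P
  rw [hyp_mem_iff hH, hyp_mem_iff hH']
  simp only [hall]

/-! ### The group action -/

lemma mapPt_mul (a b : GL3) (P : Submodule R4 (Fin 3 → R4)) :
    mapPt (a * b) P = mapPt a (mapPt b P) := by
  unfold mapPt
  rw [← Submodule.map_comp, ← Matrix.mulVecLin_mul]
  rfl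

lemma mapPt_one (P : Submodule R4 (Fin 3 → R4)) : mapPt 1 P = P := by
  unfold mapPt
  rw [Units.val_one, Matrix.mulVecLin_one, Submodule.map_id]

lemma mapPt_inv_left (a : GL3) (P : Submodule R4 (Fin 3 → R4)) : mapPt a⁻¹ (mapPt a P) = P := by
  rw [← mapPt_mul, inv_mul_cancel, mapPt_one]

lemma mapPt_inv_right (a : GL3) (P : Submodule R4 (Fin 3 → R4)) : mapPt a (mapPt a⁻¹ P) = P := by
  rw [← mapPt_mul, mul_inv_cancel, mapPt_one]

lemma mapPt_le (a : GL3) (P L : Submodule R4 (Fin 3 → R4)) :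
    mapPt a P ≤ L ↔ P ≤ mapPt a⁻¹ L := by
  constructor
  · intro h
    have := Submodule.map_mono (f := Matrix.mulVecLin ((a⁻¹ : GL3) : Matrix (Fin 3) (Fin 3) R4)) h
    change mapPt a⁻¹ (mapPt a P) ≤ mapPt a⁻¹ L at this
    rwa [mapPt_inv_left] at this
  · intro h
    have := Submodule.map_mono (f := Matrix.mulVecLin (a : Matrix (Fin 3) (Fin 3) R4)) h
    change mapPt a P ≤ mapPt a (mapPt a⁻¹ L) at this
    rwa [mapPt_inv_right] at this

lemma mulVec_inj (a : GL3) : Function.Injective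
    (Matrix.mulVecLin (a : Matrix (Fin 3) (Fin 3) R4)) := by
  intro v w h
  have h' := congrArg (Matrix.mulVec ((a⁻¹ : GL3) : Matrix (Fin 3) (Fin 3) R4)) h
  simp only [Matrix.mulVecLin_apply, Matrix.mulVec_mulVec, ← Units.val_mul, inv_mul_cancel,
    Units.val_one, Matrix.one_mulVec] at h'
  exact h'

lemma isLine_mapPt (a : GL3) {L : Submodule R4 (Fin 3 → R4)} (h : IsLine L) :
    IsLine (mapPt a L) := by
  obtain ⟨e⟩ := h
  exact ⟨e.trans (Submodule.equivMapOfInjective _ (mulVec_inj a) L)⟩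

lemma mapPt_span (a : GL3) (v : Fin 3 → R4) : mapPt a (Submodule.span R4 {v}) =
    Submodule.span R4 {(a : Matrix (Fin 3) (Fin 3) R4).mulVec v} := by
  unfold mapPt
  rw [Submodule.map_span, Set.image_singleton, Matrix.mulVecLin_apply]

lemma isPoint_mapPt (a : GL3) {P : Submodule R4 (Fin 3 → R4)} (h : IsPoint P) :
    IsPoint (mapPt a P) := by
  obtain ⟨v, ⟨i, hi⟩, rfl⟩ := h
  refine ⟨_, ?_, mapPt_span a v⟩
  by_contra hno
  push Not at hno
  have h0 : (a : Matrix (Fin 3) (Fin 3) R4).mulVec ((2 : R4) • v) = 0 := by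
    rw [Matrix.mulVec_smul]
    funext j
    have := hno j
    rw [isUnit_iff4, not_not] at this
    exact this
  have h1 : (2 : R4) • v = 0 := mulVec_inj a (by
    simp only [Matrix.mulVecLin_apply]
    rw [h0, Matrix.mulVec_zero])
  exact (isUnit_iff4 _).1 hi (congrFun h1 i)

lemma hyp_mapPt (a : GL3) {H : Set (Submodule R4 (Fin 3 → R4))} (hH : IsHyperoval H) :
    IsHyperoval (mapPt a '' H) := by
  have hinj : Function.Injective (mapPt a) := fun P Q h => by
    rw [← mapPt_inv_left a P, h, mapPt_inv_left]
  refine ⟨?_, ?_, ?_⟩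
  · rintro _ ⟨P, hP, rfl⟩
    exact isPoint_mapPt a (hH.1 P hP)
  · rw [Set.ncard_image_of_injective _ hinj, hH.2.1]
  · intro L hL
    have : {P ∈ mapPt a '' H | P ≤ L} = mapPt a '' {P ∈ H | P ≤ mapPt a⁻¹ L} := by
      ext Q
      constructor
      · rintro ⟨⟨P, hP, rfl⟩, hle⟩
        exact ⟨P, ⟨hP, (mapPt_le a P L).1 hle⟩, rfl⟩
      · rintro ⟨P, ⟨hP, hle⟩, rfl⟩
        exact ⟨⟨P, hP, rfl⟩, (mapPt_le a P L).2 hle⟩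
    rw [this, Set.ncard_image_of_injective _ hinj]
    exact hH.2.2 _ (isLine_mapPt _ hL)

lemma pglMapPt_mk (a : GL3) (P : Submodule R4 (Fin 3 → R4)) :
    pglMapPt (QuotientGroup.mk' pmOne a) P = mapPt a P := rfl

lemma pglMapSet_mk (a : GL3) (H : Set (Submodule R4 (Fin 3 → R4))) :
    pglMapSet (QuotientGroup.mk' pmOne a) H = mapPt a '' H := rfl

lemma hyp_pgl (g : PGL3) {H : Set (Submodule R4 (Fin 3 → R4))} (hH : IsHyperoval H) :
    IsHyperoval (pglMapSet g H) := by
  obtain ⟨a, rfl⟩ := QuotientGroup.mk'_surjective pmOne g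
  rw [pglMapSet_mk]
  exact hyp_mapPt a hH

lemma pglMapSet_mul (g h : PGL3) (H : Set (Submodule R4 (Fin 3 → R4))) :
    pglMapSet (g * h) H = pglMapSet g (pglMapSet h H) := by
  obtain ⟨a, rfl⟩ := QuotientGroup.mk'_surjective pmOne g
  obtain ⟨b, rfl⟩ := QuotientGroup.mk'_surjective pmOne h
  rw [← map_mul, pglMapSet_mk, pglMapSet_mk, pglMapSet_mk, ← Set.image_comp]
  congr 1
  funext P
  exact mapPt_mul a b P

lemma pglMapSet_one (H : Set (Submodule R4 (Fin 3 → R4))) : pglMapSet 1 H = H := by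
  rw [← map_one (QuotientGroup.mk' pmOne), pglMapSet_mk]
  have : mapPt 1 = id := funext mapPt_one
  rw [this, Set.image_id]

/-! ### The kernel of reduction -/

lemma mem_ker_iff (a : GL3) : a ∈ MonoidHom.ker redGL ↔
    ∀ i j, red2 ((a : Matrix (Fin 3) (Fin 3) R4) i j) = if i = j then 1 else 0 := by
  rw [MonoidHom.mem_ker, Units.ext_iff, ← Matrix.ext_iff]
  simp only [Units.val_one, Matrix.one_apply]
  rfl

lemma red2_two : ∀ x : ZMod 4, (red2 x = 1 → 2 * x = 2) ∧ (red2 x = 0 → 2 * x = 0) := by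
  decide +kernel

lemma ker_two {a : GL3} (ha : a ∈ MonoidHom.ker redGL) (v : Fin 3 → R4) :
    (2 : R4) • (a : Matrix (Fin 3) (Fin 3) R4).mulVec v = (2 : R4) • v := by
  rw [mem_ker_iff] at ha
  have h2 : (2 : R4) • (a : Matrix (Fin 3) (Fin 3) R4) = (2 : R4) • 1 := by
    ext i j
    have := ha i j
    simp only [Matrix.smul_apply, smul_eq_mul, Matrix.one_apply]
    split_ifs at this ⊢ with h
    · rw [(red2_two _).1 this]; rfl
    · rw [(red2_two _).2 this]; rfl
  rw [← Matrix.smul_mulVec, h2, Matrix.smul_mulVec, Matrix.one_mulVec]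

lemma scalar_two : ∀ c : ZMod 4, c = 1 ∨ c = -1 → c * 2 = 2 := by decide +kernel

lemma ker_eigen {a : GL3} (ha : a ∈ MonoidHom.ker redGL)
    {H : Set (Submodule R4 (Fin 3 → R4))} (hH : IsHyperoval H) (hfix : mapPt a '' H = H)
    (k : Fin 4) : ∃ c : R4, (c = 1 ∨ c = -1) ∧
      (a : Matrix (Fin 3) (Fin 3) R4).mulVec (rep (idx (Fin.castLE (by norm_num) k) 0)) =
        c • rep (idx (Fin.castLE (by norm_num) k) 0) := by
  generalize hK : (Fin.castLE (by norm_num) k : Fin 7) = K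
  have hP := fr_mem hH K
  have hQ : mapPt a (pnt (idx K (fr H K))) ∈ H := by
    have := Set.mem_image_of_mem (mapPt a) hP
    rwa [hfix] at this
  obtain ⟨K', hK'⟩ := (hyp_mem_iff hH _).1 hQ
  have hmem : (a : Matrix (Fin 3) (Fin 3) R4).mulVec (rep (idx K (fr H K))) ∈
      pnt (idx K' (fr H K')) := by
    rw [← hK', pnt, mapPt_span]
    exact Submodule.mem_span_singleton_self _
  obtain ⟨c, hc⟩ := Submodule.mem_span_singleton.1 hmem
  have h2 := ker_two ha (rep (idx K (fr H K)))
  rw [← hc] at h2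
  have hKK : K = K' := rep_class _ _ _ _ c h2.symm
  subst hKK
  have hc1 := rep_scalar _ c h2.symm
  refine ⟨c, hc1, ?_⟩
  have hbase := rep_base k (fr H K)
  rw [hK] at hbase
  obtain ⟨u, hu⟩ := hbase
  rw [hu, Matrix.mulVec_add, Matrix.mulVec_smul, ker_two ha, smul_add, smul_smul,
    scalar_two c hc1] at hc
  exact (add_right_cancel hc).symm

lemma ker_free {a : GL3} (ha : a ∈ MonoidHom.ker redGL)
    {H : Set (Submodule R4 (Fin 3 → R4))} (hH : IsHyperoval H) (hfix : mapPt a '' H = H) :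
    a ∈ pmOne := by
  obtain ⟨c0, h0, e0⟩ := ker_eigen ha hH hfix 0
  obtain ⟨c1, h1, e1⟩ := ker_eigen ha hH hfix 1
  obtain ⟨c2, h2, e2⟩ := ker_eigen ha hH hfix 2
  obtain ⟨c, h, e⟩ := ker_eigen ha hH hfix 3
  have r0 : rep (idx (Fin.castLE (by norm_num) (0 : Fin 4)) 0) = ![1, 0, 0] := by decide +kernel
  have r1 : rep (idx (Fin.castLE (by norm_num) (1 : Fin 4)) 0) = ![0, 1, 0] := by decide +kernel
  have r2 : rep (idx (Fin.castLE (by norm_num) (2 : Fin 4)) 0) = ![0, 0, 1] := by decide +kernel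
  have r3 : rep (idx (Fin.castLE (by norm_num) (3 : Fin 4)) 0) = ![1, 1, 1] := by decide +kernel
  rw [r0] at e0
  rw [r1] at e1
  rw [r2] at e2
  rw [r3] at e
  have key : (a : Matrix (Fin 3) (Fin 3) R4) = c • 1 := by
    have f0 := fun i => congrFun e0 i
    have f1 := fun i => congrFun e1 i
    have f2 := fun i => congrFun e2 i
    have f := fun i => congrFun e i
    simp [Matrix.mulVec, dotProduct, Fin.sum_univ_three, Fin.forall_fin_succ] at f0 f1 f2 f
    obtain ⟨f00, f01, f02⟩ := f0
    obtain ⟨f10, f11, f12⟩ := f1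
    obtain ⟨f20, f21, f22⟩ := f2
    ext i j
    fin_cases i <;> fin_cases j <;> simp [*] at * <;> simp [*]
  rcases h with h | h
  · left
    apply Units.ext
    rw [key, h, one_smul, Units.val_one]
  · right
    rw [Set.mem_singleton_iff]
    apply Units.ext
    rw [key, h, Units.val_neg, Units.val_one, neg_smul, one_smul]

lemma Hsub_free {g : PGL3} (hg : g ∈ Hsub) {H : Set (Submodule R4 (Fin 3 → R4))}
    (hH : IsHyperoval H) (hfix : pglMapSet g H = H) : g = 1 := by
  obtain ⟨a, ha, rfl⟩ := hg
  rw [pglMapSet_mk] at hfix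
  exact (QuotientGroup.eq_one_iff a).2 (ker_free ha hH hfix)

lemma red2_mul : ∀ x y : ZMod 4, red2 x = 0 → red2 y = 0 → x * y = 0 := by decide +kernel

/-- A matrix congruent to the identity modulo 2 is invertible. -/
lemma one_add_sq (N : Matrix (Fin 3) (Fin 3) R4)
    (h : ∀ i j, red2 (N i j) = if i = j then 1 else 0) : (N - 1) * (N - 1) = 0 := by
  have h0 : ∀ i j, red2 ((N - 1) i j) = 0 := by
    intro i j
    rw [Matrix.sub_apply, map_sub, h, Matrix.one_apply]
    split_ifs <;> simp
  ext i j
  rw [Matrix.mul_apply]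
  exact Finset.sum_eq_zero fun k _ => red2_mul _ _ (h0 _ _) (h0 _ _)

/-- The kernel of reduction is described by its entries. -/
def kerEquiv : MonoidHom.ker redGL ≃
    ((i : Fin 3) → (j : Fin 3) → {x : ZMod 4 // red2 x = if i = j then 1 else 0}) where
  toFun a i j := ⟨(a.1 : Matrix (Fin 3) (Fin 3) R4) i j, (mem_ker_iff a.1).1 a.2 i j⟩
  invFun f :=
    have h := one_add_sq (Matrix.of fun i j => (f i j).1) (fun i j => (f i j).2)
    ⟨⟨Matrix.of fun i j => (f i j).1, 2 - Matrix.of fun i j => (f i j).1, by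
        generalize (Matrix.of fun i j => (f i j).1) = N at h
        have : N * (2 - N) = 1 - (N - 1) * (N - 1) := by noncomm_ring
        rw [this, h, sub_zero], by
        generalize (Matrix.of fun i j => (f i j).1) = N at h
        have : (2 - N) * N = 1 - (N - 1) * (N - 1) := by noncomm_ring
        rw [this, h, sub_zero]⟩, (mem_ker_iff _).2 fun i j => (f i j).2⟩
  left_inv a := by
    apply Subtype.ext
    apply Units.ext
    rfl
  right_inv f := rfl

lemma card_ker : Nat.card (MonoidHom.ker redGL) = 512 := by
  rw [Nat.card_congr kerEquiv, Nat.card_pi]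
  simp only [Nat.card_pi]
  have h : ∀ i j : Fin 3, Nat.card {x : ZMod 4 // red2 x = if i = j then 1 else 0} = 2 := by
    intro i j
    rw [Nat.card_eq_fintype_card]
    revert i j
    decide +kernel
  simp only [h]
  simp

lemma card_pmOne : Nat.card pmOne = 2 := by
  have hne : (1 : GL3) ≠ -1 := by
    intro h
    have := congrArg (fun a : GL3 => (a : Matrix (Fin 3) (Fin 3) R4) 0 0) h
    revert this
    simp only [Units.val_neg, Units.val_one, Matrix.neg_apply, Matrix.one_apply_eq]
    decide
  change Nat.card (({1, -1} : Set GL3)) = 2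
  rw [Nat.card_coe_set_eq, Set.ncard_pair hne]

lemma pmOne_le : pmOne ≤ MonoidHom.ker redGL := by
  rintro a (rfl | h)
  · exact one_mem _
  · rw [Set.mem_singleton_iff] at h
    subst h
    rw [mem_ker_iff]
    intro i j
    rw [Units.val_neg, Units.val_one]
    revert i j
    decide +kernel

lemma card_Hsub : Nat.card Hsub = 256 := by
  let φ : MonoidHom.ker redGL →* PGL3 :=
    (QuotientGroup.mk' pmOne).comp (MonoidHom.ker redGL).subtype
  have hr : φ.range = Hsub := by
    rw [MonoidHom.range_comp, Subgroup.range_subtype]; rfl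
  have hk : φ.ker = pmOne.subgroupOf (MonoidHom.ker redGL) := by
    rw [← MonoidHom.comap_ker, QuotientGroup.ker_mk']; rfl
  have hck : Nat.card φ.ker = 2 := by
    rw [hk, Nat.card_congr (Subgroup.subgroupOfEquivOfLe pmOne_le).toEquiv, card_pmOne]
  have := φ.ker.card_mul_index
  rw [Subgroup.index_ker, hr, hck, card_ker] at this
  omega


/-- `Hsub` is a normal subgroup of PGL(3, ℤ/4ℤ) of order 256 which acts simply
transitively (regularly) on the set of hyperovals of PHG(2, ℤ/4ℤ). -/
theorem Hsub_normal_card_regular :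
    Hsub.Normal ∧ Nat.card Hsub = 256 ∧
    ∀ H₁ H₂ : Set (Submodule R4 (Fin 3 → R4)), IsHyperoval H₁ → IsHyperoval H₂ →
      ∃! g : PGL3, g ∈ Hsub ∧ pglMapSet g H₁ = H₂ := by
  refine ⟨?_, card_Hsub, ?_⟩
  · exact Subgroup.Normal.map (MonoidHom.normal_ker redGL) _ (QuotientGroup.mk'_surjective pmOne)
  · intro H₁ H₂ h₁ h₂
    have huniq : ∀ g g' : PGL3, g ∈ Hsub → g' ∈ Hsub → pglMapSet g H₁ = pglMapSet g' H₁ →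
        g = g' := by
      intro g g' hg hg' h
      have : g'⁻¹ * g = 1 := by
        refine Hsub_free (mul_mem (inv_mem hg') hg) h₁ ?_
        rw [pglMapSet_mul, h, ← pglMapSet_mul, inv_mul_cancel, pglMapSet_one]
      exact (inv_mul_eq_one.1 this).symm
    let F : Hsub → (Fin 4 → Fin 4) := fun g k =>
      fr (pglMapSet g.1 H₁) (Fin.castLE (by norm_num) k)
    have hF : Function.Injective F := by
      intro g g' h
      apply Subtype.ext
      refine huniq _ _ g.2 g'.2 ?_
      exact hyp_frame (hyp_pgl _ h₁) (hyp_pgl _ h₁) (fun k => congrFun h k)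
    have hbij : Function.Bijective F := by
      rw [Nat.bijective_iff_injective_and_card]
      refine ⟨hF, ?_⟩
      rw [card_Hsub, Nat.card_eq_fintype_card]
      simp
    obtain ⟨g, hg⟩ := hbij.2 (fun k => fr H₂ (Fin.castLE (by norm_num) k))
    have hgH : pglMapSet g.1 H₁ = H₂ :=
      hyp_frame (hyp_pgl _ h₁) h₂ (fun k => congrFun hg k)
    refine ⟨g.1, ⟨g.2, hgH⟩, ?_⟩
    rintro g' ⟨hg', e⟩
    exact huniq _ _ hg' g.2 (e.trans hgH.symm)
end

section
/- Every quadrangle of PHG(2, ℤ/4ℤ) is contained in exactly one hyperoval; that is, for every set of four points lying in four pairwise distinct neighbour classes no three of which are collinear in the quotient plane PG(2,𝔽₂), there is a unique hyperoval of PHG(2, ℤ/4ℤ) containing these four points. -/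
instance : RingHomSurjective red2 :=
  ⟨fun y => by
    fin_cases y
    · exact ⟨0, map_zero _⟩
    · exact ⟨1, map_one _⟩⟩

/-- Coordinatewise reduction mod 2, as a semilinear map (Fin 3 → ℤ/4ℤ) → (Fin 3 → 𝔽₂). -/
def redMap : (Fin 3 → ZMod 4) →ₛₗ[red2] (Fin 3 → ZMod 2) where
  toFun v := fun i => red2 (v i)
  map_add' := by intros; funext i; simp
  map_smul' := by intros; funext i; simp [Pi.smul_apply, smul_eq_mul]

/-- The neighbour class of a point, viewed as a point of the quotient plane PG(2,𝔽₂):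
the 𝔽₂-line of 𝔽₂³ spanned by the coordinatewise reduction mod 2. -/
def redPt (P : Submodule R4 (Fin 3 → R4)) : Submodule (ZMod 2) (Fin 3 → ZMod 2) :=
  Submodule.map redMap P

/-- Three points of PG(2,𝔽₂) (given as subspaces of 𝔽₂³) are collinear iff together
they span a subspace of dimension at most 2. -/
def CollinearF2 (A B C : Submodule (ZMod 2) (Fin 3 → ZMod 2)) : Prop :=
  Module.finrank (ZMod 2) ↥(A ⊔ B ⊔ C) ≤ 2

/-- A quadrangle of PHG(2, ℤ/4ℤ): a set of four points lying in four pairwise distinct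
neighbour classes, no three of which are collinear in the quotient plane PG(2,𝔽₂). -/
def IsQuadrangleSet (S : Set (Submodule R4 (Fin 3 → R4))) : Prop :=
  (∀ P ∈ S, IsPoint P) ∧ S.ncard = 4 ∧
  (∀ P ∈ S, ∀ Q ∈ S, P ≠ Q → redPt P ≠ redPt Q) ∧
  ∀ P ∈ S, ∀ Q ∈ S, ∀ T ∈ S, P ≠ Q → P ≠ T → Q ≠ T →
    ¬ CollinearF2 (redPt P) (redPt Q) (redPt T)

/-- The seven coordinate vectors of the hyperoval through the standard frame. -/
def hv : Fin 7 → (Fin 3 → ZMod 4) :=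
  ![![1,0,0], ![0,1,0], ![0,0,1], ![1,1,1], ![1,3,2], ![1,2,3], ![2,1,3]]

/-- The explicit 3×3 determinant with rows a, b, c. -/
def dt {R : Type} [CommRing R] (a b c : Fin 3 → R) : R :=
  a 0 * b 1 * c 2 - a 0 * b 2 * c 1 - a 1 * b 0 * c 2
    + a 1 * b 2 * c 0 + a 2 * b 0 * c 1 - a 2 * b 1 * c 0

lemma dt_eq_det {R : Type} [CommRing R] (a b c : Fin 3 → R) :
    dt a b c = (Matrix.of ![a, b, c]).det := by
  rw [Matrix.det_fin_three]; simp [dt]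

lemma dt_line {R : Type} [CommRing R] (L : Submodule R (Fin 3 → R)) (hL : IsLine L)
    (e : (Fin 3 → R) ≃ₗ[R] (Fin 3 → R)) (x y z : Fin 3 → R)
    (hx : e x ∈ L) (hy : e y ∈ L) (hz : e z ∈ L) : dt x y z = 0 := by
  obtain ⟨f⟩ := hL
  have key : ∀ x : Fin 3 → R, e x ∈ L → ∃ a b : R,
      x = a • e.symm (f (Pi.single 0 1)) + b • e.symm (f (Pi.single 1 1)) := by
    intro x hx
    obtain ⟨w, hw⟩ := f.surjective ⟨e x, hx⟩
    refine ⟨w 0, w 1, ?_⟩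
    have h2 : w = w 0 • Pi.single 0 1 + w 1 • Pi.single 1 1 := by
      ext i; fin_cases i <;> simp
    have h3 : ((f w : L) : Fin 3 → R) = e x := by rw [hw]
    apply e.injective
    rw [← h3]
    conv_lhs => rw [h2]
    simp
  obtain ⟨a, b, h1⟩ := key x hx
  obtain ⟨a', b', h2⟩ := key y hy
  obtain ⟨a'', b'', h3⟩ := key z hz
  rw [h1, h2, h3]
  simp only [dt, Pi.add_apply, Pi.smul_apply, smul_eq_mul]
  ring

lemma line_pair (e : (Fin 3 → ZMod 4) ≃ₗ[ZMod 4] (Fin 3 → ZMod 4)) (p q : Fin 3 → ZMod 4)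
    (h : ∀ a b : ZMod 4, a • p + b • q = 0 → a = 0 ∧ b = 0) :
    IsLine (Submodule.span (ZMod 4) {e p, e q}) := by
  have hli : LinearIndependent (ZMod 4) ![e p, e q] := by
    rw [LinearIndependent.pair_iff]
    intro a b hab
    apply h
    apply e.injective
    simpa using hab
  have hb := Module.Basis.span hli
  have hr : Set.range ![e p, e q] = {e p, e q} := by simp [Matrix.range_cons, Set.pair_comm]
  rw [hr] at hb
  exact ⟨hb.equivFun.symm⟩

lemma unim (v : Fin 3 → ZMod 4) : (∃ i, IsUnit (v i)) ↔ (2 : ZMod 4) • v ≠ 0 := by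
  have h : ∀ a : ZMod 4, IsUnit a ↔ 2 * a ≠ 0 := by decide
  simp only [h, ne_eq, funext_iff, Pi.smul_apply, smul_eq_mul, Pi.zero_apply, not_forall]

lemma hv_unim (i : Fin 7) : (2 : ZMod 4) • hv i ≠ 0 := by revert i; decide

lemma hv_inj : ∀ i j : Fin 7, ∀ c : ZMod 4, c • hv i = hv j → i = j := by decide

lemma hv_det : ∀ i j k : Fin 7, i ≠ j → i ≠ k → j ≠ k → dt (hv i) (hv j) (hv k) ≠ 0 := by
  decide

lemma hv_line : ∀ i j : Fin 4, i ≠ j → ∀ a b : ZMod 4,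
    a • hv (i.castLE (by norm_num)) + b • hv (j.castLE (by norm_num)) = 0 → a = 0 ∧ b = 0 := by
  decide

lemma hv_cover' : ∀ x y z : ZMod 4, (2 : ZMod 4) • ![x, y, z] ≠ 0 →
    (∃ i : Fin 7, hv i = ![x, y, z] ∨ (3 : ZMod 4) • hv i = ![x, y, z]) ∨
    ∃ i j : Fin 4, i ≠ j ∧ ∃ a b : ZMod 4,
      a • hv (i.castLE (by norm_num)) + b • hv (j.castLE (by norm_num)) = ![x, y, z] := by
  decide +kernel

lemma hv_cover (v : Fin 3 → ZMod 4) (hvu : (2 : ZMod 4) • v ≠ 0) :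
    (∃ i : Fin 7, hv i = v ∨ (3 : ZMod 4) • hv i = v) ∨
    ∃ i j : Fin 4, i ≠ j ∧ ∃ a b : ZMod 4,
      a • hv (i.castLE (by norm_num)) + b • hv (j.castLE (by norm_num)) = v := by
  have h : v = ![v 0, v 1, v 2] := by ext i; fin_cases i <;> rfl
  rw [h] at hvu ⊢
  exact hv_cover' _ _ _ hvu

lemma frame_case (e : (Fin 3 → ZMod 4) ≃ₗ[ZMod 4] (Fin 3 → ZMod 4))
    (S : Set (Submodule R4 (Fin 3 → R4)))
    (hS : S = Set.range (fun i : Fin 4 =>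
      Submodule.span R4 {e (hv (i.castLE (by norm_num)))})) :
    ∃! H : Set (Submodule R4 (Fin 3 → R4)), IsHyperoval H ∧ S ⊆ H := by
  set g : Fin 7 → Submodule R4 (Fin 3 → R4) := fun i => Submodule.span R4 {e (hv i)} with hg
  have ginj : Function.Injective g := by
    intro i j hij
    have h1 : e (hv j) ∈ g i := by rw [hij]; exact Submodule.mem_span_singleton_self _
    obtain ⟨c, hc⟩ := Submodule.mem_span_singleton.1 h1
    apply hv_inj i j c
    apply e.injective
    simpa using hc
  have hcard : (Set.range g).ncard = 7 := by
    rw [← Set.image_univ, Set.ncard_image_of_injective _ ginj]; simp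
  have h2e : ∀ w : Fin 3 → ZMod 4, (2 : ZMod 4) • e w ≠ 0 ↔ (2 : ZMod 4) • w ≠ 0 := by
    intro w
    rw [← map_smul, ne_eq, ne_eq, LinearEquiv.map_eq_zero_iff]
  refine ⟨Set.range g, ⟨⟨?_, hcard, ?_⟩, ?_⟩, ?_⟩
  · rintro _ ⟨i, rfl⟩
    exact ⟨_, (unim _).2 ((h2e _).2 (hv_unim i)), rfl⟩
  · intro L hL
    by_contra hlt
    push Not at hlt
    have hfin : {P ∈ Set.range g | P ≤ L}.Finite := (Set.finite_range g).subset (fun _ h => h.1)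
    obtain ⟨a, b, c, ⟨⟨i, rfl⟩, ha⟩, ⟨⟨j, rfl⟩, hb⟩, ⟨⟨k, rfl⟩, hc⟩, hab, hac, hbc⟩ :=
      (Set.two_lt_ncard_iff hfin).1 hlt
    refine hv_det i j k (fun h => hab (by rw [h])) (fun h => hac (by rw [h]))
      (fun h => hbc (by rw [h])) (dt_line L hL e _ _ _ ?_ ?_ ?_)
    · exact ha (Submodule.mem_span_singleton_self _)
    · exact hb (Submodule.mem_span_singleton_self _)
    · exact hc (Submodule.mem_span_singleton_self _)
  · rw [hS]
    rintro _ ⟨i, rfl⟩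
    exact ⟨i.castLE (by norm_num), rfl⟩
  · rintro H ⟨⟨hpt, hc7, hlin⟩, hSH⟩
    refine Set.eq_of_subset_of_ncard_le ?_ (by rw [hcard, hc7]) (Set.finite_range g)
    intro P hP
    obtain ⟨v, hu, rfl⟩ := hpt P hP
    obtain ⟨w, rfl⟩ := e.surjective v
    rw [unim, h2e] at hu
    have hF : H.Finite := Set.finite_of_ncard_ne_zero (by rw [hc7]; norm_num)
    rcases hv_cover w hu with ⟨i, h | h⟩ | ⟨i, j, hij, a, b, h⟩
    · exact ⟨i, by rw [hg, ← h]⟩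
    · refine ⟨i, ?_⟩
      rw [hg, ← h, map_smul]
      exact (Submodule.span_singleton_smul_eq (by decide : IsUnit (3 : ZMod 4)) _).symm
    · by_contra hno
      set P := Submodule.span R4 {e w} with hPdef
      let i' : Fin 7 := i.castLE (by norm_num)
      let j' : Fin 7 := j.castLE (by norm_num)
      have hij' : i' ≠ j' := fun h => hij (by simpa [i', j'] using h)
      have hi : g i' ∈ H := hSH (by rw [hS]; exact ⟨i, rfl⟩)
      have hj : g j' ∈ H := hSH (by rw [hS]; exact ⟨j, rfl⟩)
      have hL := line_pair e (hv i') (hv j') (hv_line i j hij)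
      have hle := hlin _ hL
      have : 2 < {P ∈ H | P ≤ Submodule.span (ZMod 4) {e (hv i'), e (hv j')}}.ncard := by
        rw [Set.two_lt_ncard_iff (hF.subset (fun _ h => h.1))]
        refine ⟨g i', g j', P, ⟨hi, ?_⟩, ⟨hj, ?_⟩, ⟨hP, ?_⟩, ginj.ne hij',
          fun h => hno ⟨_, h⟩, fun h => hno ⟨_, h⟩⟩
        · exact Submodule.span_mono (by simp)
        · exact Submodule.span_mono (by simp)
        · rw [hPdef, Submodule.span_singleton_le_iff_mem, Submodule.mem_span_pair]
          exact ⟨a, b, by rw [← h]; simp [i', j']⟩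
      omega

lemma red_unit : ∀ d : ZMod 4, red2 d ≠ 0 → IsUnit d := by decide

lemma dt_unit (u v w : Fin 3 → ZMod 4)
    (h : ¬ CollinearF2 (redPt (Submodule.span R4 {u})) (redPt (Submodule.span R4 {v}))
      (redPt (Submodule.span R4 {w}))) : IsUnit (dt u v w) := by
  apply red_unit
  intro h0
  apply h
  have h1 : dt (redMap u) (redMap v) (redMap w) = 0 := by
    rw [← h0]
    simp [dt, redMap]
  rw [dt_eq_det] at h1
  unfold CollinearF2 redPt
  rw [Submodule.map_span, Submodule.map_span, Submodule.map_span, ← Submodule.span_union,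
    ← Submodule.span_union]
  rw [Set.image_singleton, Set.image_singleton, Set.image_singleton]
  have hr : ({redMap u} ∪ {redMap v} ∪ {redMap w} : Set (Fin 3 → ZMod 2))
      = Set.range ![redMap u, redMap v, redMap w] := by
    ext x; simp [Matrix.range_cons]
  rw [hr]
  by_contra hgt
  have hle := finrank_range_le_card (R := ZMod 2) ![redMap u, redMap v, redMap w]
  have hli : LinearIndependent (ZMod 2) ![redMap u, redMap v, redMap w] := by
    rw [linearIndependent_iff_card_eq_finrank_span]
    unfold Set.finrank at hle ⊢
    simp only [Fintype.card_fin] at hle ⊢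
    omega
  have := (Matrix.linearIndependent_rows_iff_isUnit
    (A := Matrix.of ![redMap u, redMap v, redMap w])).1 hli
  rw [Matrix.isUnit_iff_isUnit_det, h1] at this
  exact not_isUnit_zero this

/-- Every quadrangle of PHG(2, ℤ/4ℤ) is contained in a unique hyperoval. -/
theorem quadrangle_in_unique_hyperoval :
    ∀ S : Set (Submodule R4 (Fin 3 → R4)), IsQuadrangleSet S →
      ∃! H : Set (Submodule R4 (Fin 3 → R4)), IsHyperoval H ∧ S ⊆ H := by
  rintro S ⟨hpt, h4, -, hcol⟩
  obtain ⟨A, B, C, D, hAB, hAC, hAD, hBC, hBD, hCD, rfl⟩ := Set.ncard_eq_four.1 h4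
  obtain ⟨a, -, rfl⟩ := hpt A (by simp)
  obtain ⟨b, -, rfl⟩ := hpt B (by simp)
  obtain ⟨c, -, rfl⟩ := hpt C (by simp)
  obtain ⟨d, -, rfl⟩ := hpt D (by simp)
  have u0 := dt_unit a b c (hcol _ (by simp) _ (by simp) _ (by simp) hAB hAC hBC)
  have u1 := dt_unit d b c (hcol _ (by simp) _ (by simp) _ (by simp) hBD.symm hCD.symm hBC)
  have u2 := dt_unit a d c (hcol _ (by simp) _ (by simp) _ (by simp) hAD hAC hCD.symm)
  have u3 := dt_unit a b d (hcol _ (by simp) _ (by simp) _ (by simp) hAB hAD hBD)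
  let N : Matrix (Fin 3) (Fin 3) (ZMod 4) :=
    (Matrix.of ![dt d b c • a, dt a d c • b, dt a b d • c]).transpose
  have hN : IsUnit N.det := by
    have : N.det = dt d b c * dt a d c * dt a b d * dt a b c := by
      rw [Matrix.det_transpose, ← dt_eq_det]
      generalize dt d b c = x
      generalize dt a d c = y
      generalize dt a b d = z
      simp only [dt, Pi.smul_apply, smul_eq_mul]
      ring
    rw [this]
    exact ((u1.mul u2).mul u3).mul u0
  let e := N.toLinearEquiv' (N.invertibleOfIsUnitDet hN)
  have he : ∀ w, e w = w 0 • dt d b c • a + w 1 • dt a d c • b + w 2 • dt a b d • c := by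
    intro w
    change N.mulVec w = _
    ext i
    simp [N, Matrix.mulVec, dotProduct, Fin.sum_univ_three]
    ring
  have e0 : e (hv 0) = dt d b c • a := by rw [he]; simp [hv]
  have e1 : e (hv 1) = dt a d c • b := by rw [he]; simp [hv]
  have e2 : e (hv 2) = dt a b d • c := by rw [he]; simp [hv]
  have e3 : e (hv 3) = dt a b c • d := by
    rw [he]
    have : hv 3 = ![1, 1, 1] := rfl
    rw [this]
    ext i
    fin_cases i <;> simp [dt] <;> ring
  apply frame_case e
  have hr : ∀ f : Fin 4 → Submodule R4 (Fin 3 → R4), Set.range f = {f 0, f 1, f 2, f 3} := by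
    intro f
    ext x
    simp [Fin.exists_fin_succ, eq_comm]
  rw [hr]
  change _ = ({Submodule.span R4 {e (hv 0)}, Submodule.span R4 {e (hv 1)},
    Submodule.span R4 {e (hv 2)}, Submodule.span R4 {e (hv 3)}} : Set _)
  rw [e0, e1, e2, e3, Submodule.span_singleton_smul_eq u0, Submodule.span_singleton_smul_eq u1,
    Submodule.span_singleton_smul_eq u2, Submodule.span_singleton_smul_eq u3]
end

section
/- Every hyperoval of PHG(2, ℤ/4ℤ) contains exactly 168 ordered quadrangles, i.e. exactly 168 ordered 4-tuples of its points lying in four pairwise distinct neighbour classes no three of which are collinear in the quotient plane PG(2,𝔽₂). -/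
/-- An ordered quadrangle of PHG(2, ℤ/4ℤ): a 4-tuple of points lying in four pairwise
distinct neighbour classes, no three of which are collinear in PG(2,𝔽₂). -/
def IsQuadrangleT (Q : Fin 4 → Submodule R4 (Fin 3 → R4)) : Prop :=
  (∀ i, IsPoint (Q i)) ∧
  (∀ i j, i ≠ j → redPt (Q i) ≠ redPt (Q j)) ∧
  ∀ i j k, i ≠ j → i ≠ k → j ≠ k → ¬ CollinearF2 (redPt (Q i)) (redPt (Q j)) (redPt (Q k))

namespace HQ

abbrev T4 := ZMod 4 × ZMod 4 × ZMod 4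
abbrev T2 := ZMod 2 × ZMod 2 × ZMod 2

def um (w : T4) : Bool := w.1 * w.1 == 1 || w.2.1 * w.2.1 == 1 || w.2.2 * w.2.2 == 1

def perp (w v : T4) : Bool := w.1 * v.1 + w.2.1 * v.2.1 + w.2.2 * v.2.2 == 0

def vals : List (ZMod 4) := [0, 1, 2, 3]
def allT : List T4 := vals.flatMap fun a => vals.flatMap fun b => vals.map fun c => (a, b, c)
def allU : List T4 := allT.filter um

/-- neighbour vectors -/
def nb (v v' : T4) : Bool :=
  2 * v.1 == 2 * v'.1 && 2 * v.2.1 == 2 * v'.2.1 && 2 * v.2.2 == 2 * v'.2.2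

theorem allU_nodup : allU.Nodup := by decide +kernel
theorem mem_allT : ∀ v : T4, v ∈ allT := by decide +kernel
theorem mem_allU (v : T4) : v ∈ allU ↔ um v = true := by
  simp [allU, mem_allT]

theorem fact1 : allU.all (fun v => (allU.filter (fun w => perp w v)).length == 12) = true := by
  decide +kernel

theorem fact2 : allU.all (fun v =>
    let W := allU.filter (fun w => perp w v)
    allU.all (fun v' =>
      let n := (W.filter (fun w => perp w v')).length
      Nat.ble 2 n && (!(nb v v') || Nat.ble 4 n))) = true := by
  decide +kernel

/-- Determinant over F2. -/
def dt (a b c : T2) : ZMod 2 :=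
  a.1 * b.2.1 * c.2.2 - a.1 * b.2.2 * c.2.1 - a.2.1 * b.1 * c.2.2 + a.2.1 * b.2.2 * c.1
    + a.2.2 * b.1 * c.2.1 - a.2.2 * b.2.1 * c.1

theorem dt_swap1 : ∀ a b c : T2, dt a b c = dt b a c := by decide +kernel
theorem dt_swap2 : ∀ a b c : T2, dt a b c = dt a c b := by decide +kernel

def good (q : T2 × T2 × T2 × T2) : Prop :=
  dt q.1 q.2.1 q.2.2.1 ≠ 0 ∧ dt q.1 q.2.1 q.2.2.2 ≠ 0 ∧ dt q.1 q.2.2.1 q.2.2.2 ≠ 0 ∧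
    dt q.2.1 q.2.2.1 q.2.2.2 ≠ 0
instance : DecidablePred good := fun q => by unfold good; infer_instance

theorem count : (Finset.univ.filter good).card = 168 := by decide +kernel


def toT {α : Type} (v : Fin 3 → α) : α × α × α := (v 0, v 1, v 2)

theorem toT_inj {α : Type} {v w : Fin 3 → α} (h : toT v = toT w) : v = w := by
  simp only [toT, Prod.mk.injEq] at h
  funext i
  fin_cases i
  · exact h.1
  · exact h.2.1
  · exact h.2.2

/-- The kernel of a functional. -/
def ker (F : Fin 3 → ZMod 4) : Submodule R4 (Fin 3 → R4) where
  carrier := {x | ∑ j, F j * x j = 0}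
  zero_mem' := by simp
  add_mem' := by
    intro a b ha hb
    simp only [Set.mem_setOf_eq, Pi.add_apply, mul_add, Finset.sum_add_distrib] at *
    rw [ha, hb, add_zero]
  smul_mem' := by
    intro c x hx
    simp only [Set.mem_setOf_eq, Pi.smul_apply, smul_eq_mul] at *
    have : ∑ j, F j * (c * x j) = c * ∑ j, F j * x j := by
      rw [Finset.mul_sum]; refine Finset.sum_congr rfl fun j _ => by ring
    rw [this, hx, mul_zero]

theorem mem_ker (F x : Fin 3 → ZMod 4) : x ∈ ker F ↔ ∑ j, F j * x j = 0 := Iff.rfl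

theorem ker_isLine (F : Fin 3 → ZMod 4) (i : Fin 3) (u : ZMod 4) (hu : u * F i = 1) :
    IsLine (ker F) := by
  let φ : ker F →ₗ[R4] (Fin 2 → R4) :=
    { toFun := fun x j => x.1 (i.succAbove j)
      map_add' := fun x y => rfl
      map_smul' := fun c x => rfl }
  have key : ∀ x : Fin 3 → ZMod 4, x ∈ ker F ↔
      x i = -(u * ∑ j, F (i.succAbove j) * x (i.succAbove j)) := by
    intro x
    rw [mem_ker, Fin.sum_univ_succAbove _ i]
    constructor
    · intro h
      linear_combination u * h - x i * hu
    · intro h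
      rw [h]
      linear_combination (-∑ j, F (i.succAbove j) * x (i.succAbove j)) * hu
  refine ⟨(LinearEquiv.ofBijective φ ⟨?_, ?_⟩).symm⟩
  · intro x y h
    have h' : ∀ j, x.1 (i.succAbove j) = y.1 (i.succAbove j) := fun j => congrFun h j
    apply Subtype.ext
    funext k
    refine Fin.succAboveCases i ?_ h' k
    rw [(key _).1 x.2, (key _).1 y.2]
    simp only [h']
  · intro y
    refine ⟨⟨i.insertNth (-(u * ∑ j, F (i.succAbove j) * y j)) y, ?_⟩, ?_⟩
    · rw [key]; simp
    · funext j; simp [φ]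

theorem sq_of_unit : ∀ a : ZMod 4, IsUnit a → a * a = 1 := by
  intro a h
  obtain ⟨b, hb⟩ := h.exists_right_inv
  revert a b; decide

theorem um_iff (v : Fin 3 → ZMod 4) : um (toT v) = true ↔ ∃ i, v i * v i = 1 := by
  simp [um, toT, Fin.exists_fin_succ, or_assoc]

theorem perp_iff (w v : Fin 3 → ZMod 4) : perp (toT w) (toT v) = true ↔ v ∈ ker w := by
  simp [perp, toT, mem_ker, Fin.sum_univ_three]

theorem toT_surj {α : Type} (t : α × α × α) : ∃ v : Fin 3 → α, toT v = t :=
  ⟨![t.1, t.2.1, t.2.2], rfl⟩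

theorem line_of_um (w : T4) (hw : um w = true) : ∃ L : Submodule R4 (Fin 3 → R4), IsLine L ∧
    ∀ v : Fin 3 → ZMod 4, v ∈ L ↔ perp w (toT v) = true := by
  obtain ⟨F, rfl⟩ := toT_surj w
  obtain ⟨i, hi⟩ := (um_iff F).1 hw
  exact ⟨ker F, ker_isLine F i _ hi, fun v => (perp_iff F v).symm⟩

def WW (v : T4) : Finset T4 := Finset.univ.filter fun w => um w = true ∧ perp w v = true

theorem WW_eq (v : T4) (p : T4 → Bool) : ((WW v).filter fun w => p w = true).card =
    ((allU.filter (fun w => perp w v)).filter p).length := by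
  rw [← List.toFinset_card_of_nodup ((allU_nodup.filter _).filter _)]
  congr 1
  ext w
  simp [WW, mem_allU]
  tauto

theorem WW_card (v : T4) (hv : um v = true) : (WW v).card = 12 := by
  have h := List.all_eq_true.1 fact1 v ((mem_allU v).2 hv)
  have h2 := WW_eq v (fun _ => true)
  simp at h h2
  omega

theorem WW_two (v v' : T4) (hv : um v = true) (hv' : um v' = true) :
    2 ≤ ((WW v).filter fun w => perp w v' = true).card ∧
    (nb v v' = true → 4 ≤ ((WW v).filter fun w => perp w v' = true).card) := by
  have h := List.all_eq_true.1 (List.all_eq_true.1 fact2 v ((mem_allU v).2 hv)) v'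
    ((mem_allU v').2 hv')
  rw [WW_eq v (fun w => perp w v')]
  generalize ((allU.filter (fun w => perp w v)).filter (fun w => perp w v')).length = n at *
  rw [Bool.and_eq_true, Bool.or_eq_true, Nat.ble_eq, Nat.ble_eq] at h
  refine ⟨h.1, fun hn => ?_⟩
  rcases h.2 with h | h
  · simp [hn] at h
  · exact h

theorem no_nb (H : Set (Submodule R4 (Fin 3 → R4))) (hH : IsHyperoval H)
    (g : Submodule R4 (Fin 3 → R4) → Fin 3 → R4)
    (hu : ∀ P ∈ H, um (toT (g P)) = true) (hg : ∀ P ∈ H, P = Submodule.span R4 {g P})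
    (P P' : Submodule R4 (Fin 3 → R4)) (hP : P ∈ H) (hP' : P' ∈ H)
    (hn : nb (toT (g P)) (toT (g P')) = true) : P = P' := by
  classical
  by_contra hne
  obtain ⟨-, h7, hL⟩ := hH
  have hfin : H.Finite := Set.finite_of_ncard_ne_zero (by omega)
  set S := hfin.toFinset with hS
  have hmem : ∀ Q, Q ∈ S ↔ Q ∈ H := fun Q => by simp [hS]
  have hSc : S.card = 7 := by rw [← h7, Set.ncard_eq_toFinset_card H hfin]
  let r : T4 → Submodule R4 (Fin 3 → R4) → Prop := fun w Q => perp w (toT (g Q)) = true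
  have h1 : ∑ w ∈ WW (toT (g P)), ((S.erase P).bipartiteAbove r w).card ≤ 12 := by
    rw [← WW_card _ (hu P hP), ← smul_eq_mul (a := (WW (toT (g P))).card) (b := 1) |>.trans
      (mul_one _)]
    apply Finset.sum_le_card_nsmul
    intro w hw
    simp only [WW, Finset.mem_filter, Finset.mem_univ, true_and] at hw
    obtain ⟨L, hLl, hLm⟩ := line_of_um w hw.1
    have hle : ∀ Q ∈ H, perp w (toT (g Q)) = true → Q ≤ L := by
      intro Q hQ hp
      rw [hg Q hQ, Submodule.span_singleton_le_iff_mem]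
      exact (hLm _).2 hp
    have h2 := hL L hLl
    have hsub : ((insert P ((S.erase P).bipartiteAbove r w) : Finset _) : Set _) ⊆
        {P ∈ H | P ≤ L} := by
      intro Q hQ
      simp only [Finset.coe_insert, Set.mem_insert_iff, Finset.mem_coe,
        Finset.mem_bipartiteAbove, Finset.mem_erase, hmem] at hQ
      rcases hQ with rfl | ⟨⟨-, hQ⟩, hr⟩
      · exact ⟨hP, hle _ hP hw.2⟩
      · exact ⟨hQ, hle _ hQ hr⟩
    have h3 := (Set.ncard_le_ncard hsub (hfin.subset fun _ h => h.1)).trans h2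
    rw [Set.ncard_coe_finset, Finset.card_insert_of_notMem
      (by simp [Finset.mem_bipartiteAbove])] at h3
    omega
  rw [Finset.sum_card_bipartiteAbove_eq_sum_card_bipartiteBelow] at h1
  have hP'S : P' ∈ S.erase P := Finset.mem_erase.2 ⟨fun h => hne h.symm, (hmem _).2 hP'⟩
  rw [← Finset.add_sum_erase _ _ hP'S] at h1
  have h4 : 4 ≤ ((WW (toT (g P))).bipartiteBelow r P').card :=
    (WW_two _ _ (hu P hP) (hu P' hP')).2 hn
  have h5 : ((S.erase P).erase P').card • 2 ≤
      ∑ Q ∈ (S.erase P).erase P', ((WW (toT (g P))).bipartiteBelow r Q).card := by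
    apply Finset.card_nsmul_le_sum
    intro Q hQ
    have hQ' : Q ∈ H := (hmem _).1 (Finset.mem_of_mem_erase (Finset.mem_of_mem_erase hQ))
    exact (WW_two _ _ (hu P hP) (hu Q hQ')).1
  rw [Finset.card_erase_of_mem hP'S, Finset.card_erase_of_mem ((hmem _).2 hP), hSc] at h5
  simp only [smul_eq_mul] at h5
  omega

theorem collinear_iff (a b c : Fin 3 → ZMod 2) :
    CollinearF2 (Submodule.span _ {a}) (Submodule.span _ {b}) (Submodule.span _ {c}) ↔
      dt (toT a) (toT b) (toT c) = 0 := by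
  have hdet : dt (toT a) (toT b) (toT c) = (Matrix.of ![a, b, c]).det := by
    rw [Matrix.det_fin_three]
    simp [dt, toT]
  have hspan : Submodule.span (ZMod 2) {a} ⊔ Submodule.span _ {b} ⊔ Submodule.span _ {c} =
      Submodule.span (ZMod 2) (Set.range ![a, b, c]) := by
    rw [← Submodule.span_union, ← Submodule.span_union]
    congr 1
    ext x
    simp [Fin.exists_fin_succ, eq_comm, or_assoc]
  have hli : LinearIndependent (ZMod 2) ![a, b, c] ↔ (Matrix.of ![a, b, c]).det ≠ 0 := by
    rw [← isUnit_iff_ne_zero, ← Matrix.isUnit_iff_isUnit_det,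
      ← Matrix.linearIndependent_rows_iff_isUnit]
    rfl
  rw [hdet, CollinearF2, hspan]
  rw [← not_iff_not, ← ne_eq ((Matrix.of ![a, b, c]).det) 0, ← hli,
    linearIndependent_iff_card_eq_finrank_span, Set.finrank]
  have := finrank_range_le_card (R := ZMod 2) ![a, b, c]
  simp only [Set.finrank, Fintype.card_fin] at this ⊢
  omega

theorem redPt_span (v : Fin 3 → R4) :
    redPt (Submodule.span R4 {v}) = Submodule.span (ZMod 2) {redMap v} := by
  rw [redPt, Submodule.map_span, Set.image_singleton]

theorem red2_nb : ∀ a b : ZMod 4, red2 a = red2 b → 2 * a = 2 * b := by decide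

theorem red2_unit : ∀ a : ZMod 4, a * a = 1 → red2 a ≠ 0 := by decide

theorem dt_self : ∀ a c : T2, dt a a c = 0 := by decide +kernel
theorem dt_zero : ∀ a c : T2, dt 0 a c = 0 := by decide +kernel

theorem good_iff (q : Fin 4 → T2) : good (q 0, q 1, q 2, q 3) ↔
    ∀ i j k, i ≠ j → i ≠ k → j ≠ k → dt (q i) (q j) (q k) ≠ 0 := by
  constructor
  · rintro ⟨h1, h2, h3, h4⟩ i j k hij hik hjk
    simp only at h1 h2 h3 h4
    fin_cases i <;> fin_cases j <;> first
      | exact absurd rfl hij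
      | (fin_cases k <;> first
          | exact absurd rfl hik
          | exact absurd rfl hjk
          | (simp only [Fin.zero_eta, Fin.mk_one, Fin.reduceFinMk] ; grind [dt_swap1, dt_swap2]))
  · intro h
    exact ⟨h 0 1 2 (by decide) (by decide) (by decide), h 0 1 3 (by decide) (by decide) (by decide),
      h 0 2 3 (by decide) (by decide) (by decide), h 1 2 3 (by decide) (by decide) (by decide)⟩

theorem exists_third : ∀ i j : Fin 4, i ≠ j → ∃ k, i ≠ k ∧ j ≠ k := by decide

theorem good_ne_zero (q : Fin 4 → T2) (h : good (q 0, q 1, q 2, q 3)) (i : Fin 4) : q i ≠ 0 := by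
  rw [good_iff] at h
  intro h0
  obtain ⟨j, hij⟩ : ∃ j : Fin 4, i ≠ j := exists_ne i |>.imp fun _ h => h.symm
  obtain ⟨k, hik, hjk⟩ := exists_third i j hij
  exact h i j k hij hik hjk (by rw [h0, dt_zero])

end HQ

/-- Every hyperoval of PHG(2, ℤ/4ℤ) contains exactly 168 ordered quadrangles. -/
theorem hyperoval_quadrangle_count :
    ∀ H : Set (Submodule R4 (Fin 3 → R4)), IsHyperoval H →
      Nat.card {Q : Fin 4 → Submodule R4 (Fin 3 → R4) //
        (∀ i, Q i ∈ H) ∧ IsQuadrangleT Q} = 168 := by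
  intro H hH
  classical
  have hpt := hH.1
  have h7 := hH.2.1
  have hex : ∀ P, ∃ v : Fin 3 → R4, P ∈ H → ((∃ i, IsUnit (v i)) ∧ P = Submodule.span R4 {v}) := by
    intro P
    by_cases hP : P ∈ H
    · obtain ⟨v, hv⟩ := hpt P hP
      exact ⟨v, fun _ => hv⟩
    · exact ⟨0, fun h => absurd h hP⟩
  choose g hg' using hex
  have hg : ∀ P ∈ H, P = Submodule.span R4 {g P} := fun P hP => (hg' P hP).2
  have hu : ∀ P ∈ H, ∃ i, g P i * g P i = 1 := fun P hP =>
    (hg' P hP).1.imp fun i => HQ.sq_of_unit _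
  let f : Submodule R4 (Fin 3 → R4) → HQ.T2 := fun P => HQ.toT (redMap (g P))
  have finj : ∀ P ∈ H, ∀ P' ∈ H, f P = f P' → P = P' := by
    intro P hP P' hP' h
    apply HQ.no_nb H hH g (fun P hP => (HQ.um_iff _).2 (hu P hP)) hg P P' hP hP'
    have h' : ∀ i, red2 (g P i) = red2 (g P' i) := fun i => congrFun (HQ.toT_inj h) i
    have h2 : ∀ i, 2 * (g P i) = 2 * (g P' i) := fun i => HQ.red2_nb _ _ (h' i)
    simp [HQ.nb, HQ.toT, h2]
  have fne : ∀ P ∈ H, f P ≠ 0 := by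
    intro P hP h
    obtain ⟨i, hi⟩ := hu P hP
    have h0 : redMap (g P) = 0 := HQ.toT_inj (h.trans rfl)
    exact HQ.red2_unit _ hi (congrFun h0 i)
  have hfin : H.Finite := Set.finite_of_ncard_ne_zero (by omega)
  have fsurj : ∀ x : HQ.T2, x ≠ 0 → ∃ P ∈ H, f P = x := by
    have hc : hfin.toFinset.card = 7 := by rw [← h7, Set.ncard_eq_toFinset_card H hfin]
    have him : hfin.toFinset.image f = Finset.univ.filter (fun x : HQ.T2 => x ≠ 0) := by
      apply Finset.eq_of_subset_of_card_le
      · intro x hx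
        simp only [Finset.mem_image, Set.Finite.mem_toFinset] at hx
        obtain ⟨P, hP, rfl⟩ := hx
        simpa using fne P hP
      · rw [Finset.card_image_of_injOn, hc]
        · decide
        · intro P hP P' hP' h
          exact finj P (by simpa using hP) P' (by simpa using hP') h
    intro x hx
    have : x ∈ hfin.toFinset.image f := by rw [him]; simpa using hx
    simpa using this
  have hred : ∀ P ∈ H, redPt P = Submodule.span (ZMod 2) {redMap (g P)} := by
    intro P hP
    conv_lhs => rw [hg P hP]
    exact HQ.redPt_span _
  have hquad : ∀ Q : Fin 4 → Submodule R4 (Fin 3 → R4), (∀ i, Q i ∈ H) →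
      (IsQuadrangleT Q ↔ HQ.good (f (Q 0), f (Q 1), f (Q 2), f (Q 3))) := by
    intro Q hQ
    rw [HQ.good_iff (fun i => f (Q i))]
    have hcol : ∀ i j k, CollinearF2 (redPt (Q i)) (redPt (Q j)) (redPt (Q k)) ↔
        HQ.dt (f (Q i)) (f (Q j)) (f (Q k)) = 0 := by
      intro i j k
      rw [hred _ (hQ i), hred _ (hQ j), hred _ (hQ k), HQ.collinear_iff]
    constructor
    · rintro ⟨-, -, h⟩ i j k hij hik hjk h0
      exact h i j k hij hik hjk ((hcol i j k).2 h0)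
    · intro h
      have h3 : ∀ i j k, i ≠ j → i ≠ k → j ≠ k →
          ¬ CollinearF2 (redPt (Q i)) (redPt (Q j)) (redPt (Q k)) :=
        fun i j k hij hik hjk hc => h i j k hij hik hjk ((hcol i j k).1 hc)
      refine ⟨fun i => hpt _ (hQ i), ?_, h3⟩
      intro i j hij he
      obtain ⟨k, hik, hjk⟩ := HQ.exists_third i j hij
      apply h3 i j k hij hik hjk
      rw [← he]
      have := (hcol i i k).2 (HQ.dt_self _ _)
      exact this
  rw [← HQ.count, ← Fintype.card_subtype, ← Nat.card_eq_fintype_card]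
  refine Nat.card_congr (Equiv.ofBijective (fun Q => ⟨(f (Q.1 0), f (Q.1 1), f (Q.1 2), f (Q.1 3)),
    (hquad Q.1 Q.2.1).1 Q.2.2⟩) ⟨?_, ?_⟩)
  · rintro ⟨Q, hQ, _⟩ ⟨Q', hQ', _⟩ h
    have h := congrArg Subtype.val h
    simp only [Prod.mk.injEq] at h
    apply Subtype.ext
    funext i
    apply finj _ (hQ i) _ (hQ' i)
    fin_cases i
    · exact h.1
    · exact h.2.1
    · exact h.2.2.1
    · exact h.2.2.2
  · rintro ⟨⟨a, b, c, d⟩, hq⟩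
    have hne := HQ.good_ne_zero ![a, b, c, d] hq
    choose Q hQ hfQ using fun i => fsurj _ (hne i)
    have e : (f (Q 0), f (Q 1), f (Q 2), f (Q 3)) = (a, b, c, d) := by
      simp [hfQ]
    refine ⟨⟨Q, hQ, (hquad Q hQ).2 (by rw [e]; exact hq)⟩, Subtype.ext e⟩
end
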